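/- Let k ≥ 2, m ≥ 2, n ≥ 0, and let 0 ≤ l, l' ≤ n be integers such that m does not divide the integer (C(l+l', l'))^{⌊k/2⌋}, where C(l+l', l') is the binomial coefficient. Then TC_k(L^{2n+1}_m) ≥ k·(l+l'+1) if k is even, and TC_k(L^{2n+1}_m) ≥ (k-1)·(l+l') + k + 2n if k is odd; that is, there is no cover of (L^{2n+1}_m)^k by fewer than that many open sets each admitting a continuous section of π_k. -/

import Mathlib

/-! The lower bound is one more than the degree of a nonvanishing product of zero-divisors, but it
is obtained from explicit cochains instead of a cohomology ring. A cochain is a function on all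
finite sequences of points of `(S^{2n+1})^k` with values in `ZMod m`.

Let `U i`, `i < r`, cover the `k`-th power of the lens space, each with a motion planner. Lifting
the paths chosen by the planner to the sphere and comparing their values with the given coordinates
yields locally constant labels `c i y : Fin k → ZMod m` on the preimage of `U i` in
`(S^{2n+1})^k` (`exists_label`). The difference of the labels of two coordinates `a` and `b` is
equivariant, so its coboundary is an invariant `1`-cocycle, which represents the zero-divisor
`x_a - x_b` in degree one. Two planners together give, through the carries of the differences of
labels, an invariant `2`-cocycle representing `y_a - y_b` (`wcov`, `wcov_decomp`), where `y` is the
Bockstein of `x`. Each of these cocycles vanishes on sequences on which one of the label functions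
used in it is constant. Hence a product of `P` factors of degree two and `Q` factors of degree one
with `2 P + Q ≥ r`, built with all the planners, vanishes on all sequences of diameter less than the
Lebesgue number of the cover of `(S^{2n+1})^k` by the sets on which a label is locally constant
(`wordY_vanish`, `degree_lt`).

On the other hand the product can be evaluated on products of cells of the standard equivariant
cell structure of the sphere, subdivided by iterated prism operators (`CellSys`, `cells`, `Zd`). A
sufficiently fine subdivision only involves sequences of small diameter (`exists_fine`), so that the
value is zero. But the boundary formula (`stokes_one`, `stokes`) shows that a factor `y_a - y_b`
lowers the dimension of the cell in the coordinate `a` or `b` by two (`eval_ycup`), and a factor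
`x_a - x_b` removes a `1`-cell (`eval_xcup`). For the factors `l + l'` times `y_a - y_b` for each
pair `(a, b) = (0, 1), (2, 3), …`, then, for odd `k`, `n` times `y_{k-1} - y_0`, and finally
`x_a - x_{k-1}` for all `a < k - 1`, the value is up to sign `C(l+l', l')^⌊k/2⌋`, a product of
binomial coefficients counting how the factors are distributed over the two coordinates of each
pair (`exists_eval`). As this is nonzero modulo `m`, the number `r` of sets exceeds the degree of the
product. -/

open scoped unitInterval

/-- The map `π_k : C([0,1],X) → X^k`, `γ ↦ (γ(0), γ(1/(k-1)), …, γ(1))`. -/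
noncomputable def pik {X : Type*} [TopologicalSpace X] (k : ℕ) (γ : C(unitInterval, X)) :
    Fin k → X :=
  fun i => γ (Set.projIcc 0 1 zero_le_one ((i : ℝ) / ((k : ℝ) - 1)))

/-- The restriction of `π_k` over `S ⊆ X^k` admits a continuous section. -/
def HasSec {X : Type*} [TopologicalSpace X] (k : ℕ) (S : Set (Fin k → X)) : Prop :=
  ∃ s : C(S, C(unitInterval, X)), ∀ u : S, pik k (s u) = (u : Fin k → X)

/-- The inclusion of `U` into `Z` is null-homotopic. -/
def NullHomotopicIncl {Z : Type*} [TopologicalSpace Z] (U : Set Z) : Prop :=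
  ∃ z : Z, ContinuousMap.Homotopic ⟨Subtype.val, continuous_subtype_val⟩
    (ContinuousMap.const ↥U z)

/-- `X^k` can be covered by `r` open sets, each admitting a continuous section of `π_k`. -/
def TCCoverAt (X : Type*) [TopologicalSpace X] (k r : ℕ) : Prop :=
  ∃ U : Fin r → Set (Fin k → X),
    (∀ i, IsOpen (U i)) ∧ (⋃ i, U i) = Set.univ ∧ ∀ i, HasSec k (U i)

/-- The higher (sequential) topological complexity `TC_k(X)`. -/
noncomputable def higherTC (X : Type*) [TopologicalSpace X] (k : ℕ) : ℕ :=
  sInf {r | TCCoverAt X k r}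

/-- A Hurewicz fibration: homotopy lifting property with respect to every space. -/
def IsHurewiczFibration.{u} {E B : Type*} [TopologicalSpace E] [TopologicalSpace B]
    (p : C(E, B)) : Prop :=
  ∀ (Z : Type u) [TopologicalSpace Z] (f : C(Z, E)) (H : C(Z × unitInterval, B)),
    (∀ z, H (z, 0) = p (f z)) →
    ∃ G : C(Z × unitInterval, E), (∀ z, G (z, 0) = f z) ∧ ∀ z t, p (G (z, t)) = H (z, t)

/-- The equivalence relation on `S^{2n+1} ⊆ ℂ^{n+1}` identifying points in the same
orbit of the group of `m`-th roots of unity acting by complex scalar multiplication. -/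
noncomputable def lensSetoid (m n : ℕ) :
    Setoid (Metric.sphere (0 : EuclideanSpace ℂ (Fin (n + 1))) 1) where
  r x y := ∃ ζ : ℂˣ, ζ ^ m = 1 ∧
    (y : EuclideanSpace ℂ (Fin (n + 1))) = ζ • (x : EuclideanSpace ℂ (Fin (n + 1)))
  iseqv := by
    constructor
    · exact fun x => ⟨1, one_pow m, (one_smul _ _).symm⟩
    · rintro x y ⟨ζ, hζ, h⟩
      exact ⟨ζ⁻¹, by rw [inv_pow, hζ, inv_one], by rw [h, inv_smul_smul]⟩
    · rintro x y z ⟨ζ₁, h₁, e₁⟩ ⟨ζ₂, h₂, e₂⟩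
      exact ⟨ζ₂ * ζ₁, by rw [mul_pow, h₁, h₂, one_mul], by rw [e₂, e₁, smul_smul]⟩

/-- The lens space `L^{2n+1}_m`, the quotient of the unit sphere `S^{2n+1} ⊆ ℂ^{n+1}`
by the action of the `m`-th roots of unity, with the quotient topology. -/
noncomputable def LensSpace (m n : ℕ) : Type :=
  Quotient (lensSetoid m n)

noncomputable instance (m n : ℕ) : TopologicalSpace (LensSpace m n) :=
  inferInstanceAs (TopologicalSpace (Quotient (lensSetoid m n)))

/-! ### Cochains on finite sequences and prism operators -/

section Cochains

variable {Y R : Type*} [CommRing R]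

/-- The simplicial coboundary of a function on finite sequences of points,
`(δF)(x₀, …, x_p) = ∑ i, (-1)^i F(x₀, …, x̂ᵢ, …, x_p)`, in recursive form. All sequence lengths are
handled at once; the length of a sequence is one more than the degree. -/
def delta : (List Y → R) → List Y → R
  | _, [] => 0
  | F, x :: l => F l - delta (fun u => F (x :: u)) l

/-- The dual of the prism operator between two maps `f` and `g`,
`(PF)(x₀, …, x_p) = ∑ i, (-1)^i F(f x₀, …, f xᵢ, g xᵢ, …, g x_p)`, in recursive form. -/
def prism (f g : Y → Y) : (List Y → R) → List Y → R
  | _, [] => 0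
  | F, x :: l => F (f x :: g x :: l.map g) - prism f g (fun u => F (f x :: u)) l

/-- A cochain is normalized if it vanishes on sequences with two equal consecutive entries. -/
def Nrm (F : List Y → R) : Prop := ∀ a x b, F (a ++ x :: x :: b) = 0

lemma Nrm.cons {F : List Y → R} (hF : Nrm F) (x : Y) : Nrm fun u => F (x :: u) :=
  fun a y b => hF (x :: a) y b

lemma delta_add (F G : List Y → R) (l : List Y) : delta (F + G) l = delta F l + delta G l := by
  induction l generalizing F G with
  | nil => simp [delta]
  | cons x l ih =>
    have := ih (fun u => F (x :: u)) (fun u => G (x :: u))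
    simp only [delta, Pi.add_apply]
    rw [show (fun u => F (x :: u) + G (x :: u)) = (fun u => F (x :: u)) + fun u => G (x :: u)
      from rfl, this]
    ring

lemma delta_smul (c : R) (F : List Y → R) (l : List Y) : delta (c • F) l = c * delta F l := by
  induction l generalizing F with
  | nil => simp [delta]
  | cons x l ih =>
    have := ih (fun u => F (x :: u))
    simp only [delta, Pi.smul_apply, smul_eq_mul]
    rw [show (fun u => c * F (x :: u)) = c • (fun u => F (x :: u)) from rfl, this]
    ring

lemma prism_add (f g : Y → Y) (F G : List Y → R) (l : List Y) :
    prism f g (F + G) l = prism f g F l + prism f g G l := by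
  induction l generalizing F G with
  | nil => simp [prism]
  | cons x l ih =>
    have := ih (fun u => F (f x :: u)) (fun u => G (f x :: u))
    simp only [prism, Pi.add_apply]
    rw [show (fun u => F (f x :: u) + G (f x :: u)) = (fun u => F (f x :: u)) + fun u => G (f x :: u)
      from rfl, this]
    ring

lemma prism_smul (f g : Y → Y) (c : R) (F : List Y → R) (l : List Y) :
    prism f g (c • F) l = c * prism f g F l := by
  induction l generalizing F with
  | nil => simp [prism]
  | cons x l ih =>
    have := ih (fun u => F (f x :: u))
    simp only [prism, Pi.smul_apply, smul_eq_mul]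
    rw [show (fun u => c * F (f x :: u)) = c • (fun u => F (f x :: u)) from rfl, this]
    ring

/-- The coboundary as a linear map. -/
def deltaL : (List Y → R) →ₗ[R] (List Y → R) where
  toFun := delta
  map_add' F G := funext fun l => delta_add F G l
  map_smul' c F := funext fun l => delta_smul c F l

/-- The dual prism operator as a linear map. -/
def prismL (f g : Y → Y) : (List Y → R) →ₗ[R] (List Y → R) where
  toFun := prism f g
  map_add' F G := funext fun l => prism_add f g F G l
  map_smul' c F := funext fun l => prism_smul f g c F l

/-- Pull-back of cochains along a map of points. -/
def pullL (h : Y → Y) : (List Y → R) →ₗ[R] (List Y → R) :=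
  LinearMap.funLeft R R (List.map h)

@[simp] lemma pullL_apply (h : Y → Y) (F : List Y → R) (l : List Y) :
    pullL h F l = F (l.map h) := rfl

@[simp] lemma deltaL_nil (F : List Y → R) : deltaL F [] = 0 := rfl

lemma deltaL_cons (F : List Y → R) (x : Y) (l : List Y) :
    deltaL F (x :: l) = F l - deltaL (fun u => F (x :: u)) l := rfl

@[simp] lemma prismL_nil (f g : Y → Y) (F : List Y → R) : prismL f g F [] = 0 := rfl

lemma prismL_cons (f g : Y → Y) (F : List Y → R) (x : Y) (l : List Y) :
    prismL f g F (x :: l) =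
      F (f x :: g x :: l.map g) - prismL f g (fun u => F (f x :: u)) l := rfl

lemma prismL_zero_fun (f g : Y → Y) (F : List Y → R) (hF : ∀ l, F l = 0) (l : List Y) :
    prismL f g F l = 0 := by
  rw [show F = 0 from funext hF, map_zero]; rfl

/-- The prism operator is a chain homotopy between the maps induced by `f` and `g`. -/
lemma prism_homotopy (f g : Y → Y) (F : List Y → R) (l : List Y) :
    prismL f g (deltaL F) l + deltaL (prismL f g F) l = F (l.map g) - F (l.map f) := by
  induction l generalizing F with
  | nil => simp
  | cons x l ih =>
    have h1 := ih (fun u => F (f x :: u))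
    have e1 : (fun u => deltaL F (f x :: u)) = F - deltaL (fun u => F (f x :: u)) := rfl
    have e2 : (fun u => prismL f g F (x :: u)) =
        pullL g (fun u => F (f x :: g x :: u)) - prismL f g (fun u => F (f x :: u)) := rfl
    have e3 : ∀ (G : List Y → R) (l : List Y), deltaL (pullL g G) l = deltaL G (l.map g) := by
      intro G l
      induction l generalizing G with
      | nil => rfl
      | cons y l ih2 =>
        rw [deltaL_cons, List.map_cons, deltaL_cons, ← ih2]; rfl
    rw [prismL_cons, deltaL_cons (prismL f g F), e1, e2, map_sub, map_sub, deltaL_cons, deltaL_cons]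
    simp only [Pi.sub_apply, e3, List.map_cons]
    linear_combination h1

lemma deltaL_pull (h : Y → Y) (F : List Y → R) :
    deltaL (pullL h F) = pullL h (deltaL F) := by
  funext l
  induction l generalizing F with
  | nil => rfl
  | cons y l ih =>
    rw [pullL_apply, deltaL_cons, List.map_cons, deltaL_cons]
    have := ih (fun u => F (h y :: u))
    rw [pullL_apply] at this
    rw [← this]; rfl

lemma prismL_pull (f g h : Y → Y) (F : List Y → R) :
    prismL f g (pullL h F) = prismL (h ∘ f) (h ∘ g) F := by
  funext l
  induction l generalizing F with
  | nil => rfl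
  | cons y l ih =>
    rw [prismL_cons, prismL_cons]
    have := ih (fun u => F (h (f y) :: u))
    simp only [Function.comp] at this ⊢
    rw [← this]; simp; rfl

lemma pull_prismL (f g h : Y → Y) (F : List Y → R) :
    pullL h (prismL f g F) = prismL (f ∘ h) (g ∘ h) F := by
  funext l
  induction l generalizing F with
  | nil => rfl
  | cons y l ih =>
    rw [pullL_apply, List.map_cons, prismL_cons, prismL_cons]
    have := ih (fun u => F (f (h y) :: u))
    rw [pullL_apply] at this
    simp only [Function.comp] at this ⊢
    rw [← this]; simp [Function.comp_def]

lemma prismL_congr_map {f g f' g' : Y → Y} (F : List Y → R) (l : List Y)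
    (hf : ∀ y ∈ l, f y = f' y) (hg : ∀ y ∈ l, g y = g' y) :
    prismL f g F l = prismL f' g' F l := by
  induction l generalizing F with
  | nil => rfl
  | cons y l ih =>
    rw [prismL_cons, prismL_cons, hf y (by simp), hg y (by simp),
      ih _ (fun z hz => hf z (by simp [hz])) (fun z hz => hg z (by simp [hz])),
      List.map_congr_left (fun z hz => hg z (by simp [hz]))]

lemma prismL_nrm (f g : Y → Y) {F : List Y → R} (hF : Nrm F) : Nrm (prismL f g F) := by
  intro a
  induction a generalizing F with
  | nil =>
    intro x b
    simp only [List.nil_append]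
    rw [prismL_cons, prismL_cons, prismL_zero_fun f g (fun u => F (f x :: f x :: u))
      (fun l => hF [] (f x) l)]
    have h1 := hF [f x] (g x) (b.map g)
    have h2 := hF [] (f x) (g x :: b.map g)
    simp only [List.nil_append, List.cons_append] at h1 h2
    simp [h1, h2]
  | cons y a ih =>
    intro x b
    rw [List.cons_append, prismL_cons, ih (hF.cons (f y))]
    have h1 := hF (f y :: g y :: a.map g) (g x) (b.map g)
    simpa using h1

lemma prismL_eq_zero {f g : Y → Y} {F : List Y → R} (hF : Nrm F) (l : List Y)
    (h : ∀ y ∈ l, f y = g y) : prismL f g F l = 0 := by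
  induction l generalizing F with
  | nil => rfl
  | cons y l ih =>
    rw [prismL_cons, ih (hF.cons _) (fun z hz => h z (by simp [hz])), ← h y (by simp)]
    simpa using hF [] (f y) (l.map g)

lemma prismL_congr (f g : Y → Y) {F G : List Y → R} (l : List Y)
    (h : ∀ l' : List Y, (∀ z ∈ l', ∃ y ∈ l, z = f y ∨ z = g y) → F l' = G l') :
    prismL f g F l = prismL f g G l := by
  induction l generalizing F G with
  | nil => rfl
  | cons y l ih =>
    rw [prismL_cons, prismL_cons, h]
    · congr 1
      apply ih
      intro l' hl'
      apply h
      intro z hz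
      rcases List.mem_cons.1 hz with rfl | hz
      · exact ⟨y, by simp, Or.inl rfl⟩
      · obtain ⟨w, hw, h'⟩ := hl' z hz
        exact ⟨w, by simp [hw], h'⟩
    · intro z hz
      simp only [List.mem_cons, List.mem_map] at hz
      rcases hz with rfl | rfl | ⟨w, hw, rfl⟩
      · exact ⟨y, by simp, Or.inl rfl⟩
      · exact ⟨y, by simp, Or.inr rfl⟩
      · exact ⟨w, by simp [hw], Or.inr rfl⟩

lemma Nrm.pull {F : List Y → R} (hF : Nrm F) (h : Y → Y) : Nrm (pullL h F) := by
  intro a x b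
  simpa using hF (a.map h) (h x) (b.map h)

lemma Nrm.add {F G : List Y → R} (hF : Nrm F) (hG : Nrm G) : Nrm (F + G) := by
  intro a x b; simp [hF a x b, hG a x b]

lemma Nrm.sub {F G : List Y → R} (hF : Nrm F) (hG : Nrm G) : Nrm (F - G) := by
  intro a x b; simp [hF a x b, hG a x b]

lemma Nrm.neg {F : List Y → R} (hF : Nrm F) : Nrm (-F) := by
  intro a x b; simp [hF a x b]

lemma Nrm.sum {ι : Type*} (s : Finset ι) {F : ι → List Y → R} (hF : ∀ i, Nrm (F i)) :
    Nrm (∑ i ∈ s, F i) := by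
  intro a x b
  rw [Finset.sum_apply]
  exact Finset.sum_eq_zero fun i _ => hF i a x b

/-- The dual prism operator of a homotopy `f 0, f 1, …, f N` in discrete time. -/
def prismN (N : ℕ) (f : ℕ → Y → Y) : (List Y → R) →ₗ[R] (List Y → R) :=
  ∑ s ∈ Finset.range N, prismL (f s) (f (s + 1))

lemma prismN_apply (N : ℕ) (f : ℕ → Y → Y) (F : List Y → R) (l : List Y) :
    prismN N f F l = ∑ s ∈ Finset.range N, prismL (f s) (f (s + 1)) F l := by
  simp [prismN]

lemma prismN_homotopy (N : ℕ) (f : ℕ → Y → Y) (F : List Y → R) :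
    prismN N f (deltaL F) = pullL (f N) F - pullL (f 0) F - deltaL (prismN N f F) := by
  funext l
  have h := Finset.sum_range_sub (fun s => F (l.map (f s))) N
  have : deltaL (prismN N f F) l =
      ∑ s ∈ Finset.range N, deltaL (prismL (f s) (f (s + 1)) F) l := by
    simp [prismN]
  rw [Pi.sub_apply, Pi.sub_apply, this, prismN_apply, pullL_apply, pullL_apply, ← h,
    ← Finset.sum_sub_distrib]
  refine Finset.sum_congr rfl fun s _ => ?_
  rw [← prism_homotopy]; ring

lemma prismN_nrm (N : ℕ) (f : ℕ → Y → Y) {F : List Y → R} (hF : Nrm F) : Nrm (prismN N f F) := by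
  rw [prismN, LinearMap.sum_apply]
  exact Nrm.sum _ fun s => prismL_nrm _ _ hF

lemma prismN_pull (N : ℕ) (f : ℕ → Y → Y) (h : Y → Y) (F : List Y → R) :
    prismN N f (pullL h F) = prismN N (fun s => h ∘ f s) F := by
  simp [prismN, prismL_pull]

lemma pull_prismN (N : ℕ) (f : ℕ → Y → Y) (h : Y → Y) (F : List Y → R) :
    pullL h (prismN N f F) = prismN N (fun s => f s ∘ h) F := by
  simp [prismN, pull_prismL]

lemma prismN_congr (N : ℕ) (f : ℕ → Y → Y) {F G : List Y → R} (l : List Y)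
    (h : ∀ s < N, ∀ l' : List Y, (∀ z ∈ l', ∃ y ∈ l, z = f s y ∨ z = f (s + 1) y) →
      F l' = G l') : prismN N f F l = prismN N f G l := by
  rw [prismN_apply, prismN_apply]
  exact Finset.sum_congr rfl fun s hs => prismL_congr _ _ _ (h s (Finset.mem_range.1 hs))

lemma prismN_congr_map (N : ℕ) (f f' : ℕ → Y → Y) (F : List Y → R) (l : List Y)
    (h : ∀ s ≤ N, ∀ y ∈ l, f s y = f' s y) : prismN N f F l = prismN N f' F l := by
  rw [prismN_apply, prismN_apply]
  refine Finset.sum_congr rfl fun s hs => ?_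
  have := Finset.mem_range.1 hs
  exact prismL_congr_map _ _ (h s this.le) (h (s + 1) this)

lemma prismN_eq_zero (N : ℕ) (f : ℕ → Y → Y) {F : List Y → R} (hF : Nrm F) (l : List Y)
    (h : ∀ s < N, ∀ y ∈ l, f s y = f (s + 1) y) : prismN N f F l = 0 := by
  rw [prismN_apply]
  exact Finset.sum_eq_zero fun s hs => prismL_eq_zero hF l (h s (Finset.mem_range.1 hs))

/-- The sum of the pull-backs along `id, t, …, t^(m-1)`. -/
def avg (m : ℕ) (t : Y → Y) : (List Y → R) →ₗ[R] (List Y → R) :=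
  ∑ i ∈ Finset.range m, pullL (t^[i])

lemma avg_apply (m : ℕ) (t : Y → Y) (F : List Y → R) (l : List Y) :
    avg m t F l = ∑ i ∈ Finset.range m, F (l.map (t^[i])) := by
  simp [avg]

lemma avg_delta (m : ℕ) (t : Y → Y) (F : List Y → R) :
    avg m t (deltaL F) = deltaL (avg m t F) := by
  simp [avg, deltaL_pull]

lemma avg_nrm (m : ℕ) (t : Y → Y) {F : List Y → R} (hF : Nrm F) : Nrm (avg m t F) := by
  rw [avg, LinearMap.sum_apply]
  exact Nrm.sum _ fun s => hF.pull _

lemma sum_range_shift {M : Type*} [AddCommGroup M] (m : ℕ) (u : ℕ → M) (h : u m = u 0) :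
    ∑ i ∈ Finset.range m, u (i + 1) = ∑ i ∈ Finset.range m, u i := by
  have := Finset.sum_range_succ u m
  rw [Finset.sum_range_succ', h] at this
  exact add_right_cancel this

lemma avg_pull {m : ℕ} {t : Y → Y} (ht : ∀ y, t^[m] y = y) (F : List Y → R) :
    avg m t (pullL t F) = avg m t F := by
  funext l
  rw [avg_apply, avg_apply]
  have := sum_range_shift m (fun i => F (l.map t^[i])) (by simp [funext ht])
  rw [← this]
  refine Finset.sum_congr rfl fun i _ => ?_
  simp only [pullL_apply, List.map_map, ← Function.iterate_succ']

lemma pull_avg {m : ℕ} {t : Y → Y} (ht : ∀ y, t^[m] y = y) (F : List Y → R) :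
    pullL t (avg m t F) = avg m t F := by
  funext l
  rw [pullL_apply, avg_apply, avg_apply]
  have := sum_range_shift m (fun i => F (l.map t^[i])) (by simp [funext ht])
  rw [← this]
  refine Finset.sum_congr rfl fun i _ => ?_
  simp only [List.map_map, ← Function.iterate_succ]

end Cochains

/-! ### The cell operators in one coordinate -/

section Cells

variable {Y R : Type*} [CommRing R]

/-- Data of a cyclic action with generator `t` of order dividing `m`, together with discretized
homotopies (with `N` steps) which build up the standard equivariant cell structure of an odd
sphere. `Sk j` is the `j`-skeleton. The homotopy `f j` sweeps out the `j`-cell from the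
`(j-1)`-skeleton: for `j` odd it goes from the identity to the translation by `t`, for `j` even it
is a contraction to a point. -/
structure CellSys (Y : Type*) (m N J : ℕ) where
  t : Y → Y
  f : ℕ → ℕ → Y → Y
  Sk : ℕ → Set Y
  t_pow : ∀ y, t^[m] y = y
  t_mem : ∀ j y, Odd j → y ∈ Sk j → t y ∈ Sk j
  f_mem : ∀ j s y, j < J → s ≤ N → y ∈ Sk j → f (j + 1) s y ∈ Sk (j + 1)
  f_zero : ∀ j y, j < J → y ∈ Sk j → f (j + 1) 0 y = y
  f_one : ∀ y, y ∈ Sk 0 → f 1 N y = t y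
  f_fix : ∀ j s y, j + 2 ≤ J → Odd j → y ∈ Sk j → f (j + 2) s y = y
  f_top : ∀ j s y, j + 2 ≤ J → Odd j → s ≤ N → y ∈ Sk j →
    f (j + 2) N (f (j + 1) s (t y)) = t (f (j + 1) s y)
  f_const : ∀ j s i y, j + 2 ≤ J → Even j → s < N → y ∈ Sk j →
    f (j + 2) N (t^[i] (f (j + 1) s y)) = f (j + 2) N (t^[i] (f (j + 1) (s + 1) y))

namespace CellSys

variable {m N J : ℕ} (C : CellSys Y m N J)

/-- The dual of the chain operator raising the dimension of a cell from `j - 1` to `j`. -/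
noncomputable def A (j : ℕ) : (List Y → R) →ₗ[R] (List Y → R) :=
  open Classical in
  if Odd j then prismN N (C.f j) else avg m C.t ∘ₗ prismN N (C.f j)

/-- Evaluation on the `j`-cell; the argument is the sequence of the remaining coordinates. -/
noncomputable def Z : ℕ → (List Y → R) →ₗ[R] (List Y → R)
  | 0 => LinearMap.id
  | j + 1 => Z j ∘ₗ C.A (j + 1)

/-- The dual of the cellular boundary: the boundary of the `j`-cell is `t - 1` times the
`(j-1)`-cell for `j` odd, and minus the sum of all its translates for `j` even. -/
noncomputable def eps : ℕ → (List Y → R) →ₗ[R] (List Y → R) := fun j =>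
  open Classical in
  if j = 0 then 0 else if Odd j then pullL C.t - LinearMap.id else - avg m C.t

lemma A_odd {j : ℕ} (hj : Odd j) : (C.A j : (List Y → R) →ₗ[R] _) = prismN N (C.f j) := by
  simp [A, hj]

lemma A_even {j : ℕ} (hj : Even j) (F : List Y → R) :
    C.A j F = avg m C.t (prismN N (C.f j) F) := by
  rw [A, if_neg (by simpa using hj)]; rfl

lemma Z_succ (j : ℕ) (F : List Y → R) : C.Z (j + 1) F = C.Z j (C.A (j + 1) F) := rfl

lemma A_nrm (j : ℕ) {F : List Y → R} (hF : Nrm F) : Nrm (C.A j F) := by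
  rcases Nat.even_or_odd j with h | h
  · rw [A_even C h]; exact avg_nrm _ _ (prismN_nrm _ _ hF)
  · rw [A_odd C h]; exact prismN_nrm _ _ hF

lemma Z_nrm (j : ℕ) {F : List Y → R} (hF : Nrm F) : Nrm (C.Z j F) := by
  induction j generalizing F with
  | zero => exact hF
  | succ j ih => exact ih (C.A_nrm _ hF)

lemma A_nil (j : ℕ) (F : List Y → R) : C.A j F [] = 0 := by
  rcases Nat.even_or_odd j with h | h
  · rw [A_even C h, avg_apply]; simp [prismN_apply]
  · rw [A_odd C h]; simp [prismN_apply]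

lemma Z_nil (j : ℕ) (F : List Y → R) (hF : F [] = 0) : C.Z j F [] = 0 := by
  induction j generalizing F with
  | zero => exact hF
  | succ j ih => exact ih _ (C.A_nil _ F)

lemma eps_zero (F : List Y → R) : C.eps 0 F = 0 := by simp [eps]

lemma eps_odd {j : ℕ} (hj : Odd j) (F : List Y → R) : C.eps j F = pullL C.t F - F := by
  rw [eps, if_neg (by rintro rfl; simp at hj), if_pos hj]; rfl

lemma eps_even {j : ℕ} (hj : Even j) (h0 : j ≠ 0) (F : List Y → R) :
    C.eps j F = - avg m C.t F := by
  rw [eps, if_neg h0, if_neg (by simpa using hj)]; rfl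

/-- A family of predicates on sequences which is propagated by the cell operators. -/
structure Prop' (p : ℕ → List Y → Prop) : Prop where
  t_map : ∀ j l, Odd j → p j l → p j (l.map C.t)
  f_map : ∀ j s l l', j < J → s < N → p j l →
    (∀ z ∈ l', ∃ y ∈ l, z = C.f (j + 1) s y ∨ z = C.f (j + 1) (s + 1) y) → p (j + 1) l'

lemma Prop'.iter {p : ℕ → List Y → Prop} (hp : C.Prop' p) {j : ℕ} (hj : Odd j) (i : ℕ)
    (l : List Y) (h : p j l) : p j (l.map C.t^[i]) := by
  induction i with
  | zero => simpa using h
  | succ i ih =>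
    rw [Function.iterate_succ', ← List.map_map]
    exact hp.t_map _ _ hj ih

lemma A_congr {p : ℕ → List Y → Prop} (hp : C.Prop' p) {j : ℕ} (hj : j < J)
    {F G : List Y → R} (h : ∀ l, p (j + 1) l → F l = G l) (l : List Y) (hl : p j l) :
    C.A (j + 1) F l = C.A (j + 1) G l := by
  rcases Nat.even_or_odd (j + 1) with h' | h'
  · rw [A_even C h', A_even C h', avg_apply, avg_apply]
    refine Finset.sum_congr rfl fun i _ => ?_
    have hl' := hp.iter C (by grind : Odd j) i l hl
    exact prismN_congr _ _ _ fun s hs l' h'' => h l' (hp.f_map j s _ l' hj hs hl' h'')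
  · rw [A_odd C h']
    exact prismN_congr _ _ _ fun s hs l' h'' => h l' (hp.f_map j s _ l' hj hs hl h'')

lemma Z_congr {p : ℕ → List Y → Prop} (hp : C.Prop' p) {j : ℕ} (hj : j ≤ J)
    {F G : List Y → R} (h : ∀ l, p j l → F l = G l) (l : List Y) (hl : p 0 l) :
    C.Z j F l = C.Z j G l := by
  induction j generalizing F G with
  | zero => exact h l hl
  | succ j ih =>
    exact ih (by omega) fun l' hl' => C.A_congr hp (by omega) h l' hl'

lemma prop'_sk : C.Prop' fun j l => ∀ y ∈ l, y ∈ C.Sk j where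
  t_map j l hj h := by
    intro y hy
    obtain ⟨z, hz, rfl⟩ := List.mem_map.1 hy
    exact C.t_mem _ _ hj (h z hz)
  f_map j s l l' hj hs h h' := by
    intro y hy
    obtain ⟨z, hz, rfl | rfl⟩ := h' y hy
    · exact C.f_mem _ _ _ hj hs.le (h z hz)
    · exact C.f_mem _ _ _ hj hs (h z hz)

lemma iter_mem {j i : ℕ} {y : Y} (hj : Odd j) (h : y ∈ C.Sk j) : C.t^[i] y ∈ C.Sk j := by
  induction i with
  | zero => simpa using h
  | succ i ih => rw [Function.iterate_succ_apply']; exact C.t_mem _ _ hj ih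

/-- Translates of a cell: the top end of the homotopy sweeping out an odd cell is the translate by
`t` of the bottom end. -/
lemma Z_top {j : ℕ} (hj : j < J) (hj' : Even j) (F : List Y → R) (l : List Y)
    (hl : ∀ y ∈ l, y ∈ C.Sk 0) :
    C.Z j (pullL (C.f (j + 1) N) F) l = C.Z j (pullL C.t F) l := by
  rcases j with _ | _ | j
  · simp only [Z, LinearMap.id_apply, pullL_apply]
    rw [List.map_congr_left fun y hy => C.f_one y (hl y hy)]
  · simp at hj'
  · have hjo : Odd (j + 1) := by grind
    rw [Z_succ, Z_succ (F := pullL C.t F)]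
    refine C.Z_congr C.prop'_sk (by omega) (fun l' hl' => ?_) l hl
    rw [C.A_even hj', C.A_even hj', prismN_pull, prismN_pull, ← avg_pull C.t_pow, pull_prismN,
      avg_apply, avg_apply]
    refine Finset.sum_congr rfl fun i _ => prismN_congr_map _ _ _ _ _ fun s hs y hy => ?_
    obtain ⟨z, hz, rfl⟩ := List.mem_map.1 hy
    exact C.f_top _ _ _ (by omega) hjo hs (C.iter_mem hjo (hl' z hz))

/-- The boundary formula for the cell operators in one coordinate. -/
theorem stokes_one {j : ℕ} (hj : j ≤ J) {F : List Y → R} (hF : Nrm F) (l : List Y)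
    (hl : ∀ y ∈ l, y ∈ C.Sk 0) :
    C.Z j (deltaL F) l = C.Z (j - 1) (C.eps j F) l + (-1) ^ j * deltaL (C.Z j F) l := by
  induction j generalizing F with
  | zero => simp [eps_zero, Z]
  | succ j ih =>
    have ih' := ih (by omega) (C.A_nrm (j + 1) hF)
    have hzero : C.Z j (pullL (C.f (j + 1) 0) F) l = C.Z j F l := by
      refine C.Z_congr C.prop'_sk (by omega) (fun l' hl' => ?_) l hl
      rw [pullL_apply, List.map_congr_left fun y hy => C.f_zero j y (by omega) (hl' y hy),
        List.map_id']
    rcases Nat.even_or_odd (j + 1) with h' | h'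
    · have hjo : Odd j := by grind
      have hA : C.A (j + 1) (deltaL F) = avg m C.t (pullL (C.f (j + 1) N) F) -
          avg m C.t (pullL (C.f (j + 1) 0) F) - deltaL (C.A (j + 1) F) := by
        rw [C.A_even h', prismN_homotopy, map_sub, map_sub, avg_delta, C.A_even h']
      have h0 : C.Z j (avg m C.t (pullL (C.f (j + 1) 0) F)) l = C.Z j (avg m C.t F) l := by
        refine C.Z_congr C.prop'_sk (by omega) (fun l' hl' => ?_) l hl
        rw [avg_apply, avg_apply]
        refine Finset.sum_congr rfl fun i _ => ?_
        rw [pullL_apply, List.map_congr_left (g := id), List.map_id]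
        intro y hy
        obtain ⟨z, hz, rfl⟩ := List.mem_map.1 hy
        exact C.f_zero j _ (by omega) (C.iter_mem hjo (hl' z hz))
      have hN : C.Z j (avg m C.t (pullL (C.f (j + 1) N) F)) l = 0 := by
        obtain ⟨j, rfl⟩ : ∃ i, j = i + 1 := ⟨j - 1, by grind⟩
        rw [Z_succ]
        have : C.Z j (C.A (j + 1) (avg m C.t (pullL (C.f (j + 1 + 1) N) F))) l
            = C.Z j (0 : List Y → R) l := by
          refine C.Z_congr C.prop'_sk (by omega) (fun l' hl' => ?_) l hl
          rw [C.A_odd hjo, avg, LinearMap.sum_apply, map_sum, Finset.sum_apply]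
          refine Finset.sum_eq_zero fun i _ => ?_
          rw [prismN_pull, prismN_pull]
          refine prismN_eq_zero _ _ hF _ fun s hs y hy => ?_
          exact C.f_const j s i y (by omega) (by grind) hs (hl' y hy)
        rw [this, map_zero]; rfl
      have hE : C.Z (j - 1) (C.eps j (C.A (j + 1) F)) l = 0 := by
        rw [C.eps_odd hjo, C.A_even h', pull_avg C.t_pow, sub_self, map_zero]; rfl
      rw [Z_succ, hA, map_sub, map_sub, Pi.sub_apply, Pi.sub_apply, h0, hN, ih', hE, ← Z_succ,
        C.eps_even h' (by omega), map_neg, Nat.add_sub_cancel, pow_succ]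
      simp only [Pi.neg_apply]
      ring
    · have hje : Even j := by grind
      have hE : C.Z (j - 1) (C.eps j (C.A (j + 1) F)) l = 0 := by
        rcases j with _ | _ | j
        · simp [eps_zero]
        · simp at hje
        · rw [C.eps_even hje (by omega)]
          have : C.Z (j + 1) (-avg m C.t (C.A (j + 1 + 1 + 1) F)) l
              = C.Z (j + 1) (0 : List Y → R) l := by
            refine C.Z_congr C.prop'_sk (by omega) (fun l' hl' => ?_) l hl
            rw [C.A_odd h', Pi.neg_apply, avg_apply, Finset.sum_eq_zero, neg_zero]; rfl
            intro i _
            have ho : Odd (j + 1) := by grind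
            refine prismN_eq_zero _ _ hF _ fun s hs y hy => ?_
            obtain ⟨z, hz, rfl⟩ := List.mem_map.1 hy
            have := C.iter_mem (i := i) ho (hl' z hz)
            rw [C.f_fix _ _ _ (by omega) ho this, C.f_fix _ _ _ (by omega) ho this]
          rw [Nat.add_sub_cancel, this, map_zero]; rfl
      rw [Z_succ, C.A_odd h', prismN_homotopy, ← C.A_odd h', map_sub, map_sub, Pi.sub_apply,
        Pi.sub_apply, hzero, C.Z_top (by omega) hje F l hl, ih', hE, ← Z_succ, C.eps_odd h',
        map_sub, Nat.add_sub_cancel, pow_succ]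
      simp only [Pi.sub_apply]
      ring

end CellSys

end Cells

/-! ### Product cells -/

section Products

variable {ι S R : Type*} [DecidableEq ι] [CommRing R]

namespace CellSys

/-- Apply `g` to the coordinate `a`. -/
def onCoord (a : ι) (g : S → S) (y : ι → S) : ι → S := Function.update y a (g (y a))

lemma onCoord_same (a : ι) (g : S → S) (y : ι → S) : onCoord a g y a = g (y a) := by
  simp [onCoord]

lemma onCoord_ne {a b : ι} (h : b ≠ a) (g : S → S) (y : ι → S) : onCoord a g y b = y b := by
  simp [onCoord, h]

lemma onCoord_comp (a : ι) (g h : S → S) (y : ι → S) :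
    onCoord a g (onCoord a h y) = onCoord a (g ∘ h) y := by
  simp [onCoord]

lemma onCoord_comm {a b : ι} (hab : a ≠ b) (g h : S → S) :
    onCoord a g ∘ onCoord b h = onCoord b h ∘ onCoord a g := by
  funext y c
  by_cases hca : c = a
  · subst hca
    simp [onCoord, hab]
  · by_cases hcb : c = b
    · subst hcb; simp [onCoord, hca]
    · simp [onCoord, hca, hcb]

lemma onCoord_iterate (a : ι) (g : S → S) (i : ℕ) : (onCoord a g)^[i] = onCoord a (g^[i]) := by
  induction i with
  | zero => funext y; simp [onCoord]
  | succ i ih =>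
    funext y
    rw [Function.iterate_succ', Function.comp, ih, onCoord_comp, Function.iterate_succ']

lemma onCoord_eq_self {a : ι} {g : S → S} {y : ι → S} (h : g (y a) = y a) :
    onCoord a g y = y := by
  simp [onCoord, h]

variable {m N J : ℕ} (C : CellSys S m N J)

/-- The cell operators acting on the coordinate `a` of a power of `S`. -/
def lift (a : ι) : CellSys (ι → S) m N J where
  t := onCoord a C.t
  f j s := onCoord a (C.f j s)
  Sk j := {y | y a ∈ C.Sk j}
  t_pow y := by
    rw [onCoord_iterate]; exact onCoord_eq_self (C.t_pow _)
  t_mem j y hj hy := by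
    simp only [Set.mem_ofPred_eq, onCoord_same]; exact C.t_mem j _ hj hy
  f_mem j s y hj hs hy := by
    simp only [Set.mem_ofPred_eq, onCoord_same]; exact C.f_mem j s _ hj hs hy
  f_zero j y hj hy := onCoord_eq_self (C.f_zero j _ hj hy)
  f_one y hy := by simp only [onCoord]; rw [C.f_one _ hy]
  f_fix j s y hj ho hy := onCoord_eq_self (C.f_fix j s _ hj ho hy)
  f_top j s y hj ho hs hy := by
    simp only [onCoord_comp]
    simp only [onCoord, Function.comp]
    rw [C.f_top j s _ hj ho hs hy]
  f_const j s i y hj he hs hy := by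
    simp only [onCoord_iterate, onCoord_comp]
    simp only [onCoord, Function.comp]
    rw [C.f_const j s i _ hj he hs hy]

/-- Evaluation on a product of cells in the coordinates in `L`. -/
noncomputable def Zs (d : ι → ℕ) : List ι → (List (ι → S) → R) →ₗ[R] (List (ι → S) → R)
  | [] => LinearMap.id
  | a :: L => (C.lift a).Z (d a) ∘ₗ Zs d L

lemma Zs_cons (d : ι → ℕ) (a : ι) (L : List ι) (F : List (ι → S) → R) :
    C.Zs d (a :: L) F = (C.lift a).Z (d a) (C.Zs d L F) := rfl

lemma Zs_nrm (d : ι → ℕ) (L : List ι) {F : List (ι → S) → R} (hF : Nrm F) : Nrm (C.Zs d L F) := by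
  induction L with
  | nil => exact hF
  | cons a L ih => exact Z_nrm _ _ ih

lemma Zs_nil (d : ι → ℕ) (L : List ι) {F : List (ι → S) → R} (hF : F [] = 0) :
    C.Zs d L F [] = 0 := by
  induction L with
  | nil => exact hF
  | cons a L ih => exact Z_nil _ _ _ ih

lemma Zs_congr_deg {d d' : ι → ℕ} {L : List ι} (h : ∀ b ∈ L, d b = d' b)
    (F : List (ι → S) → R) : C.Zs d L F = C.Zs d' L F := by
  induction L with
  | nil => rfl
  | cons a L ih => rw [Zs_cons, Zs_cons, h a (by simp), ih fun b hb => h b (by simp [hb])]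

lemma prop'_lift {P : ℕ → List S → Prop} (hP : C.Prop' P)
    (mono : ∀ j l l', l' ⊆ l → P j l → P j l') (a : ι) (e : ι → ℕ) :
    (C.lift a).Prop' fun j l => ∀ b, P (Function.update e a j b) (l.map (· b)) where
  t_map j l hj h b := by
    by_cases hb : b = a
    · subst hb
      have := hP.t_map j _ hj (by simpa using h b)
      simpa [lift, Function.comp_def, onCoord] using this
    · have := h b
      simpa [lift, Function.comp_def, onCoord, hb] using this
  f_map j s l l' hj hs h h' b := by
    by_cases hb : b = a
    · subst hb
      simp only [Function.update_self]
      refine hP.f_map j s (l.map (· b)) _ hj hs (by simpa using h b) ?_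
      intro z hz
      obtain ⟨w, hw, rfl⟩ := List.mem_map.1 hz
      obtain ⟨y, hy, h1 | h1⟩ := h' w hw
      · exact ⟨y b, List.mem_map.2 ⟨y, hy, rfl⟩, Or.inl (by rw [h1]; exact onCoord_same _ _ _)⟩
      · exact ⟨y b, List.mem_map.2 ⟨y, hy, rfl⟩, Or.inr (by rw [h1]; exact onCoord_same _ _ _)⟩
    · have h1 := h b
      simp only [Function.update_of_ne hb] at h1 ⊢
      refine mono _ _ _ ?_ h1
      intro z hz
      obtain ⟨w, hw, rfl⟩ := List.mem_map.1 hz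
      obtain ⟨y, hy, h1 | h1⟩ := h' w hw
      · exact List.mem_map.2 ⟨y, hy, by rw [h1]; exact (onCoord_ne hb _ _).symm⟩
      · exact List.mem_map.2 ⟨y, hy, by rw [h1]; exact (onCoord_ne hb _ _).symm⟩

lemma Zs_congr {P : ℕ → List S → Prop} (hP : C.Prop' P)
    (mono : ∀ j l l', l' ⊆ l → P j l → P j l') {d : ι → ℕ} (hd : ∀ b, d b ≤ J) {L : List ι}
    (hL : L.Nodup) {F G : List (ι → S) → R} (e : ι → ℕ) (he : ∀ b ∈ L, e b = 0)
    (h : ∀ l : List (ι → S), (∀ b, P (if b ∈ L then d b else e b) (l.map (· b))) → F l = G l)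
    (l : List (ι → S)) (hl : ∀ b, P (e b) (l.map (· b))) : C.Zs d L F l = C.Zs d L G l := by
  induction L generalizing e l with
  | nil => exact h l (by simpa using hl)
  | cons a L ih =>
    have hL' := List.nodup_cons.1 hL
    rw [Zs_cons, Zs_cons]
    refine Z_congr _ (C.prop'_lift hP mono a e) (hd a) (fun l' hl' => ?_) l ?_
    · refine ih hL'.2 (Function.update e a (d a)) ?_ ?_ l' hl'
      · intro b hb
        have : b ≠ a := by rintro rfl; exact hL'.1 hb
        simp [this, he b (by simp [hb])]
      · intro l'' hl''
        apply h
        intro b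
        have := hl'' b
        by_cases hb : b = a
        · subst hb; simpa [hL'.1] using this
        · simpa [hb] using this
    · have := he a (by simp)
      rw [← this]
      simpa using hl

lemma prismN_comm {Y : Type*} {N : ℕ} {f : ℕ → Y → Y} {h : Y → Y} (hc : ∀ s, f s ∘ h = h ∘ f s)
    (F : List Y → R) : prismN N f (pullL h F) = pullL h (prismN N f F) := by
  rw [prismN_pull, pull_prismN]; simp only [hc]

lemma avg_comm {Y : Type*} {m : ℕ} {t : Y → Y} {h : Y → Y} (hc : t ∘ h = h ∘ t)
    (F : List Y → R) : avg m t (pullL h F) = pullL h (avg m t F) := by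
  funext l
  rw [avg_apply, pullL_apply, avg_apply]
  refine Finset.sum_congr rfl fun i _ => ?_
  have : (t^[i]) ∘ h = h ∘ t^[i] :=
    (Function.Semiconj.iterate_left (f := t) (g := fun _ => h) (fun _ x => congrFun hc x) i 0 |>
      fun hh => funext hh)
  simp [this]

lemma A_comm {Y : Type*} (C : CellSys Y m N J) {h : Y → Y} (ht : C.t ∘ h = h ∘ C.t)
    (hf : ∀ j s, C.f j s ∘ h = h ∘ C.f j s) (j : ℕ) (F : List Y → R) :
    C.A j (pullL h F) = pullL h (C.A j F) := by
  rcases Nat.even_or_odd j with hj | hj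
  · rw [A_even C hj, A_even C hj, prismN_comm (hf j), avg_comm ht]
  · rw [A_odd C hj, prismN_comm (hf j)]

lemma Z_comm {Y : Type*} (C : CellSys Y m N J) {h : Y → Y} (ht : C.t ∘ h = h ∘ C.t)
    (hf : ∀ j s, C.f j s ∘ h = h ∘ C.f j s) (j : ℕ) (F : List Y → R) :
    C.Z j (pullL h F) = pullL h (C.Z j F) := by
  induction j generalizing F with
  | zero => rfl
  | succ j ih => rw [Z_succ, Z_succ, A_comm C ht hf, ih]

lemma Zs_comm (d : ι → ℕ) {L : List ι} {b : ι} (hb : b ∉ L) (g : S → S)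
    (F : List (ι → S) → R) :
    C.Zs d L (pullL (onCoord b g) F) = pullL (onCoord b g) (C.Zs d L F) := by
  induction L with
  | nil => rfl
  | cons a L ih =>
    have hab : a ≠ b := by rintro rfl; simp at hb
    rw [Zs_cons, Zs_cons, ih (by simp_all), Z_comm]
    · exact onCoord_comm hab _ _
    · exact fun j s => onCoord_comm hab _ _

lemma eps_comm (d : ι → ℕ) {L : List ι} {b : ι} (hb : b ∉ L) (j : ℕ)
    (F : List (ι → S) → R) :
    C.Zs d L ((C.lift b).eps j F) = (C.lift b).eps j (C.Zs d L F) := by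
  by_cases h0 : j = 0
  · subst h0; simp [eps_zero]
  · rcases Nat.even_or_odd j with h | h
    · rw [eps_even _ h h0, eps_even _ h h0, map_neg, avg, LinearMap.sum_apply, LinearMap.sum_apply,
        map_sum]
      congr 1
      refine Finset.sum_congr rfl fun i _ => ?_
      simp only [lift, onCoord_iterate]
      rw [Zs_comm _ _ hb]
    · rw [eps_odd _ h, eps_odd _ h, map_sub]
      simp only [lift]
      rw [Zs_comm _ _ hb]

lemma eps_eq_zero {Y : Type*} (C : CellSys Y m N J) (hm : (m : R) = 0) (j : ℕ) {F : List Y → R}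
    (hF : pullL C.t F = F) : C.eps j F = 0 := by
  by_cases h0 : j = 0
  · subst h0; simp [eps_zero]
  · rcases Nat.even_or_odd j with h | h
    · rw [eps_even _ h h0, avg, LinearMap.sum_apply]
      have : ∀ i, pullL (C.t^[i]) F = F := by
        intro i
        induction i with
        | zero => funext l; simp
        | succ i ih =>
          have : pullL (C.t^[i + 1]) F = pullL C.t (pullL (C.t^[i]) F) := by
            funext l; simp
          rw [this, ih, hF]
      simp only [this, Finset.sum_const, Finset.card_range]
      rw [← Nat.cast_smul_eq_nsmul R, hm, zero_smul, neg_zero]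
    · rw [eps_odd _ h, hF, sub_self]

lemma prop'_others {b : ι} {L : List ι} (hb : b ∉ L) :
    (C.lift b).Prop' fun j l => ∀ y ∈ l, ∀ c ∈ L, y c ∈ C.Sk 0 where
  t_map _ l hj h y hy c hc := by
    obtain ⟨z, hz, rfl⟩ := List.mem_map.1 hy
    have : c ≠ b := by rintro rfl; exact hb hc
    simpa [lift, onCoord_ne this] using h z hz c hc
  f_map j s l l' hj hs h h' y hy c hc := by
    have : c ≠ b := by rintro rfl; exact hb hc
    obtain ⟨z, hz, rfl | rfl⟩ := h' y hy
    · simpa [lift, onCoord_ne this] using h z hz c hc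
    · simpa [lift, onCoord_ne this] using h z hz c hc

/-- The boundary formula for product cells, for cochains which are invariant in all coordinates
except for `a`. The sign `sg` does not depend on the dimension of the cell in the coordinate `a`. -/
lemma stokes_aux (hm : (m : R) = 0) {d : ι → ℕ} (hd : ∀ b, d b ≤ J) (a : ι)
    {L : List ι} (hL : L.Nodup) : ∃ sg : R, sg * sg = 1 ∧ ∀ j ≤ J, ∃ τ : R, τ * τ = 1 ∧
    ∀ F : List (ι → S) → R, Nrm F → (∀ b, b ≠ a → pullL (onCoord b C.t) F = F) →
    ∀ l : List (ι → S), (∀ y ∈ l, ∀ c ∈ L, y c ∈ C.Sk 0) →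
    C.Zs (Function.update d a j) L (deltaL F) l =
      (if a ∈ L then sg * C.Zs (Function.update d a (j - 1)) L ((C.lift a).eps j F) l else 0)
      + τ * deltaL (C.Zs (Function.update d a j) L F) l := by
  induction L with
  | nil => exact ⟨1, by simp, fun j hj => ⟨1, by simp, fun F _ _ l _ => by simp [Zs]⟩⟩
  | cons b L ih =>
    obtain ⟨hbL, hLn⟩ := List.nodup_cons.1 hL
    obtain ⟨sg, hsg, h⟩ := ih hLn
    by_cases hba : b = a
    · subst hba
      obtain ⟨τ, hτ, h0⟩ := h 0 (by omega)
      refine ⟨τ, hτ, fun j hj => ⟨τ * (-1) ^ j, ?_, fun F hF hinv l hl => ?_⟩⟩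
      · rw [mul_mul_mul_comm, hτ, ← mul_pow]; simp
      · have hdeg : ∀ (j : ℕ) (F : List (ι → S) → R),
            C.Zs (Function.update d b j) L F = C.Zs (Function.update d b 0) L F := by
          intro j F
          refine C.Zs_congr_deg (fun c hc => ?_) F
          have : c ≠ b := by rintro rfl; exact hbL hc
          simp [this]
        have hG := C.Zs_nrm (Function.update d b 0) L hF
        rw [if_pos (by simp), Zs_cons, Zs_cons, Zs_cons, hdeg j (deltaL F), hdeg (j - 1), hdeg j F]
        simp only [Function.update_self]
        rw [(C.lift b).Z_congr (C.prop'_others hbL) hj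
          (G := τ • deltaL (C.Zs (Function.update d b 0) L F)) ?_ l
          (fun y hy c hc => hl y hy c (by simp [hc]))]
        · rw [map_smul, Pi.smul_apply, stokes_one _ hj hG l (fun y hy => hl y hy b (by simp)),
            C.eps_comm _ hbL, smul_eq_mul]
          ring
        · intro l' hl'
          rw [h0 F hF hinv l' hl', if_neg hbL, zero_add]; rfl
    · refine ⟨sg, hsg, fun j hj => ?_⟩
      obtain ⟨τ, hτ, hj'⟩ := h j hj
      refine ⟨τ * (-1) ^ d b, ?_, fun F hF hinv l hl => ?_⟩
      · rw [mul_mul_mul_comm, hτ, ← mul_pow]; simp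
      · have hG := C.Zs_nrm (Function.update d a j) L hF
        have hz : (C.lift b).eps (d b) (C.Zs (Function.update d a j) L F) = 0 := by
          rw [← C.eps_comm _ hbL, eps_eq_zero _ hm _ (hinv b hba), map_zero]
        have hlL : ∀ y ∈ l, ∀ c ∈ L, y c ∈ C.Sk 0 := fun y hy c hc => hl y hy c (by simp [hc])
        have hst := stokes_one (C.lift b) (hd b) hG l (fun y hy => hl y hy b (by simp))
        rw [hz, map_zero, Pi.zero_apply, zero_add] at hst
        rw [Zs_cons, Zs_cons, Zs_cons]
        simp only [Function.update_of_ne hba, List.mem_cons, Ne.symm hba, false_or]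
        rw [(C.lift b).Z_congr (C.prop'_others hbL) (hd b)
          (G := (if a ∈ L then sg • C.Zs (Function.update d a (j - 1)) L ((C.lift a).eps j F) else 0)
            + τ • deltaL (C.Zs (Function.update d a j) L F)) ?_ l hlL]
        · rw [map_add, map_smul, Pi.add_apply, Pi.smul_apply, hst, smul_eq_mul]
          split_ifs
          · rw [map_smul, Pi.smul_apply, smul_eq_mul]; ring
          · rw [map_zero, Pi.zero_apply]; ring
        · intro l' hl'
          rw [hj' F hF hinv l' hl']
          split_ifs <;> rfl

variable [Fintype ι]

/-- Evaluation of a cochain on the product over all coordinates `a` of the cells of dimension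
`d a`. -/
noncomputable def Zd (v₀ : S) (d : ι → ℕ) : (List (ι → S) → R) →ₗ[R] R :=
  LinearMap.proj [fun _ => v₀] ∘ₗ C.Zs d Finset.univ.toList

lemma Zd_apply (v₀ : S) (d : ι → ℕ) (F : List (ι → S) → R) :
    C.Zd v₀ d F = C.Zs d Finset.univ.toList F [fun _ => v₀] := rfl

/-- Boundary formula for the evaluation on product cells. -/
theorem stokes (hm : (m : R) = 0) {v₀ : S} (hv : v₀ ∈ C.Sk 0) {d : ι → ℕ} (hd : ∀ b, d b ≤ J)
    (a : ι) : ∃ sg : R, sg * sg = 1 ∧ ∀ j ≤ J,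
    ∀ F : List (ι → S) → R, Nrm F → F [] = 0 → (∀ b, b ≠ a → pullL (onCoord b C.t) F = F) →
    C.Zd v₀ (Function.update d a j) (deltaL F) =
      sg * C.Zd v₀ (Function.update d a (j - 1)) ((C.lift a).eps j F) := by
  obtain ⟨sg, hsg, h⟩ := C.stokes_aux hm hd a (Finset.nodup_toList (Finset.univ : Finset ι))
  refine ⟨sg, hsg, fun j hj F hF h0 hinv => ?_⟩
  obtain ⟨τ, -, h'⟩ := h j hj
  rw [Zd_apply, h' F hF hinv _ (by simpa using fun c => hv), deltaL_cons, C.Zs_nil _ _ h0]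
  simp [Zd_apply]

lemma Zd_congr {P : ℕ → List S → Prop} (hP : C.Prop' P)
    (mono : ∀ j l l', l' ⊆ l → P j l → P j l') {v₀ : S} (hv : P 0 [v₀])
    {d : ι → ℕ} (hd : ∀ b, d b ≤ J) {F G : List (ι → S) → R}
    (h : ∀ l : List (ι → S), (∀ b, P (d b) (l.map (· b))) → F l = G l) :
    C.Zd v₀ d F = C.Zd v₀ d G := by
  rw [Zd_apply, Zd_apply]
  exact C.Zs_congr hP mono hd (Finset.nodup_toList _) (fun _ => 0) (fun _ _ => rfl)
    (by simpa using h) _ (by simpa using fun _ => hv)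

end CellSys

end Products

/-! ### Products of cochains -/

section Cup

variable {Y R : Type*} [CommRing R]

/-- Product of a `0`-cochain with a cochain. -/
def cup0 (u : Y → R) (F : List Y → R) : List Y → R
  | x :: l => u x * F (x :: l)
  | [] => 0

/-- Product of a `1`-cochain with a cochain. -/
def cup1 (u : Y → Y → R) (F : List Y → R) : List Y → R
  | x :: y :: l => u x y * F (y :: l)
  | _ => 0

/-- Product of a `2`-cochain with a cochain. -/
def cup2 (u : Y → Y → Y → R) (F : List Y → R) : List Y → R
  | x :: y :: z :: l => u x y z * F (z :: l)
  | _ => 0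

/-- The coboundary of a `0`-cochain. -/
def d0 (u : Y → R) (x y : Y) : R := u y - u x

/-- The coboundary of a `1`-cochain. -/
def d1 (u : Y → Y → R) (x y z : Y) : R := u y z - u x z + u x y

/-- The unit `0`-cochain. -/
def unitC : List Y → R
  | [_] => 1
  | _ => 0

/-- Normalized cocycles of positive or zero degree. -/
structure Coc (F : List Y → R) : Prop where
  nrm : Nrm F
  nil : F [] = 0
  delta : deltaL F = 0

lemma deltaL_smul_fun (c : R) (F : List Y → R) : deltaL (fun u => c * F u) = c • deltaL F := by
  rw [← map_smul]; rfl

lemma delta_cup0 {F : List Y → R} (hF : Coc F) (u : Y → R) :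
    deltaL (cup0 u F) = cup1 (d0 u) F := by
  funext l
  rcases l with _ | ⟨x, l⟩
  · rfl
  · have h := congrFun hF.delta (x :: l)
    rw [deltaL_cons] at h
    have : deltaL (cup0 u F) (x :: l) = cup0 u F l - deltaL (fun v => u x * F (x :: v)) l := rfl
    rw [this, deltaL_smul_fun (u x) (fun v => F (x :: v)), Pi.smul_apply, smul_eq_mul, ← sub_eq_zero.1 h]
    rcases l with _ | ⟨y, l⟩
    · simp [cup0, cup1, hF.nil]
    · simp only [cup0, cup1, d0]; ring


lemma delta_cup1 {F : List Y → R} (hF : Coc F) (u : Y → Y → R) :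
    deltaL (cup1 u F) = cup2 (d1 u) F := by
  funext l
  rcases l with _ | ⟨x, l⟩
  · rfl
  · have e : (fun v => cup1 u F (x :: v)) = cup0 (u x) F := by
      funext v; rcases v with _ | ⟨y, v⟩ <;> rfl
    rw [deltaL_cons, e, delta_cup0 hF]
    rcases l with _ | ⟨y, _ | ⟨z, l⟩⟩
    · simp [cup1, cup2]
    · simp [cup1, cup2]
    · simp only [cup1, cup2, d0, d1]; ring

lemma d1_d0 (u : Y → R) : d1 (d0 u) = 0 := by
  funext x y z; simp [d1, d0]

lemma cup2_zero (F : List Y → R) : cup2 (0 : Y → Y → Y → R) F = 0 := by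
  funext l
  rcases l with _ | ⟨x, _ | ⟨y, _ | ⟨z, l⟩⟩⟩ <;> simp [cup2]

lemma cup0_nrm {F : List Y → R} (hF : Nrm F) (u : Y → R) : Nrm (cup0 u F) := by
  intro a x b
  rcases a with _ | ⟨y, a⟩
  · have := hF [] x b
    simp only [List.nil_append] at this
    simp [cup0, this]
  · have := hF (y :: a) x b
    rw [List.cons_append] at this ⊢
    simp [cup0, this]

lemma cup1_nrm {F : List Y → R} (hF : Nrm F) {u : Y → Y → R} (hu : ∀ x, u x x = 0) :
    Nrm (cup1 u F) := by
  intro a x b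
  rcases a with _ | ⟨y, _ | ⟨z, a⟩⟩
  · simp [cup1, hu]
  · have := hF [] x b
    simp only [List.nil_append] at this
    simp [cup1, this]
  · have := hF (z :: a) x b
    simp only [List.cons_append] at this ⊢
    simp [cup1, this]

lemma cup2_nrm {F : List Y → R} (hF : Nrm F) {u : Y → Y → Y → R} (hu : ∀ x z, u x x z = 0)
    (hu' : ∀ x z, u x z z = 0) : Nrm (cup2 u F) := by
  intro a x b
  rcases a with _ | ⟨y, _ | ⟨z, _ | ⟨w, a⟩⟩⟩
  · rcases b with _ | ⟨y, b⟩ <;> simp [cup2, hu]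
  · simp [cup2, hu']
  · have := hF [] x b
    simp only [List.nil_append] at this
    simp [cup2, this]
  · have := hF (w :: a) x b
    simp only [List.cons_append] at this ⊢
    simp [cup2, this]

lemma Coc.cup1 {F : List Y → R} (hF : Coc F) (u : Y → R) : Coc (cup1 (d0 u) F) where
  nrm := cup1_nrm hF.nrm (by simp [d0])
  nil := rfl
  delta := by rw [delta_cup1 hF, d1_d0, cup2_zero]

lemma delta_cup2_d1 {F : List Y → R} (hF : Coc F) (u : Y → Y → R) :
    deltaL (cup2 (d1 u) F) = 0 := by
  funext l
  rcases l with _ | ⟨x, l⟩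
  · rfl
  · have e : (fun v => cup2 (d1 u) F (x :: v)) = _root_.cup1 (d1 u x) F := by
      funext v; rcases v with _ | ⟨y, _ | ⟨z, v⟩⟩ <;> rfl
    rw [deltaL_cons, e, delta_cup1 hF]
    rcases l with _ | ⟨y, _ | ⟨z, _ | ⟨w, l⟩⟩⟩
    · simp [cup2]
    · simp [cup2]
    · simp [cup2]
    · simp only [cup2, d1, Pi.zero_apply]; ring

lemma Coc.cup2 {F : List Y → R} (hF : Coc F) {u : Y → Y → R} (hu : ∀ x, u x x = 0) :
    Coc (cup2 (d1 u) F) where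
  nrm := cup2_nrm hF.nrm (by simp [d1, hu]) (by simp [d1, hu])
  nil := rfl
  delta := delta_cup2_d1 hF u

lemma coc_unitC : Coc (unitC : List Y → R) where
  nrm := by
    intro a x b
    rcases a with _ | ⟨y, _ | ⟨z, a⟩⟩ <;> rfl
  nil := rfl
  delta := by
    funext l
    rcases l with _ | ⟨x, _ | ⟨y, l⟩⟩
    · rfl
    · simp [deltaL_cons, unitC]
    · rw [deltaL_cons, deltaL_cons]
      have : (fun u : List Y => (unitC (x :: y :: u) : R)) = 0 := rfl
      rw [this, map_zero]
      rcases l with _ | ⟨z, l⟩ <;> simp [unitC]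

lemma pull_cup0 (h : Y → Y) (u : Y → R) (F : List Y → R) :
    pullL h (cup0 u F) = cup0 (fun x => u (h x)) (pullL h F) := by
  funext l
  rcases l with _ | ⟨x, l⟩ <;> rfl

lemma pull_cup1 (h : Y → Y) (u : Y → Y → R) (F : List Y → R) :
    pullL h (cup1 u F) = cup1 (fun x y => u (h x) (h y)) (pullL h F) := by
  funext l
  rcases l with _ | ⟨x, _ | ⟨y, l⟩⟩ <;> rfl

lemma pull_cup2 (h : Y → Y) (u : Y → Y → Y → R) (F : List Y → R) :
    pullL h (cup2 u F) = cup2 (fun x y z => u (h x) (h y) (h z)) (pullL h F) := by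
  funext l
  rcases l with _ | ⟨x, _ | ⟨y, _ | ⟨z, l⟩⟩⟩ <;> rfl

lemma pull_unitC (h : Y → Y) : pullL h (unitC : List Y → R) = unitC := by
  funext l
  rcases l with _ | ⟨x, _ | ⟨y, l⟩⟩ <;> rfl

/-- `cup0` is additive in the first factor. -/
def cup0L (F : List Y → R) : (Y → R) →+ (List Y → R) where
  toFun u := cup0 u F
  map_zero' := by funext l; rcases l with _ | ⟨x, l⟩ <;> simp [cup0]
  map_add' u v := by funext l; rcases l with _ | ⟨x, l⟩ <;> simp [cup0, add_mul]

/-- `cup1` is additive in the first factor. -/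
def cup1L (F : List Y → R) : (Y → Y → R) →+ (List Y → R) where
  toFun u := cup1 u F
  map_zero' := by funext l; rcases l with _ | ⟨x, _ | ⟨y, l⟩⟩ <;> simp [cup1]
  map_add' u v := by funext l; rcases l with _ | ⟨x, _ | ⟨y, l⟩⟩ <;> simp [cup1, add_mul]

lemma cup0_one {F : List Y → R} (hF : F [] = 0) : cup0 1 F = F := by
  funext l
  rcases l with _ | ⟨x, l⟩ <;> simp [cup0, hF]

end Cup

/-! ### Residues modulo `m` -/

section Residues

variable {m : ℕ} [NeZero m]

/-- The carry of the subtraction of residues: `1` if the representative of `q` is smaller than that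
of `p`. -/
def carry (p q : ZMod m) : ℤ := if q.val < p.val then 1 else 0

/-- The indicator function of the residue `-1`. -/
def lastInd (p : ZMod m) : ℤ := if p = -1 then 1 else 0

lemma carry_self (p : ZMod m) : carry p p = 0 := by simp [carry]

lemma m_mul_carry (p q : ZMod m) : (m : ℤ) * carry p q = (q - p).val - q.val + p.val := by
  unfold carry
  split_ifs with h
  · have h1 : q.val + (m - p.val) < m := by have := p.val_lt; omega
    have : q - p = ((q.val + (m - p.val) : ℕ) : ZMod m) := by
      have := p.val_lt
      push_cast [this.le]
      simp [sub_eq_add_neg]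
    rw [this, ZMod.val_natCast_of_lt h1]
    have := p.val_lt
    push_cast [this.le]; ring
  · rw [ZMod.val_sub (by omega)]
    push_cast [not_lt.1 h]; ring

lemma m_mul_lastInd (p : ZMod m) : (m : ℤ) * lastInd p = p.val + 1 - (p + 1).val := by
  unfold lastInd
  have hp := p.val_lt
  have h : p + 1 = ((p.val + 1 : ℕ) : ZMod m) := by simp
  split_ifs with h1
  · have h2 : m ∣ p.val + 1 := by
      rw [← ZMod.natCast_eq_zero_iff, ← h, h1]; simp
    have h3 : p.val + 1 = m := le_antisymm hp (Nat.le_of_dvd (by omega) h2)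
    rw [h1, neg_add_cancel, ← h1]
    simp only [ZMod.val_zero]
    push_cast [← h3]; simp
  · have h3 : p.val + 1 ≠ m := by
      intro h3
      rw [h3] at h
      exact h1 (eq_neg_of_add_eq_zero_left (by simpa using h))
    rw [h, ZMod.val_natCast_of_lt (by omega)]
    simp

lemma carry_shift (p q : ZMod m) : carry (p + 1) (q + 1) - carry p q = lastInd q - lastInd p := by
  have hm : (m : ℤ) ≠ 0 := by exact_mod_cast NeZero.ne m
  apply mul_left_cancel₀ hm
  rw [mul_sub, mul_sub, m_mul_carry, m_mul_carry, m_mul_lastInd, m_mul_lastInd,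
    add_sub_add_right_eq_sub]
  ring

lemma sum_shift {M : Type*} [AddCommMonoid M] (p : ZMod m) (g : ZMod m → M) :
    ∑ i ∈ Finset.range m, g (p + (i : ZMod m)) = ∑ r : ZMod m, g r := by
  refine Finset.sum_nbij' (fun i => p + (i : ZMod m)) (fun r => (r - p).val) ?_ ?_ ?_ ?_ ?_
  · simp
  · simp [ZMod.val_lt]
  · intro i hi
    simp [ZMod.val_natCast_of_lt (Finset.mem_range.1 hi)]
  · simp
  · simp

lemma sum_lastInd (p : ZMod m) : ∑ i ∈ Finset.range m, lastInd (p + (i : ZMod m)) = 1 := by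
  rw [sum_shift p lastInd]
  simp [lastInd]

lemma sum_carry (p q : ZMod m) :
    ∑ i ∈ Finset.range m, carry (p + (i : ZMod m)) (q + i) = (q - p).val := by
  have hm : (m : ℤ) ≠ 0 := by exact_mod_cast NeZero.ne m
  apply mul_left_cancel₀ hm
  rw [Finset.mul_sum]
  simp only [m_mul_carry, add_sub_add_right_eq_sub]
  rw [Finset.sum_add_distrib, Finset.sum_sub_distrib, sum_shift q fun r => (r.val : ℤ),
    sum_shift p fun r => (r.val : ℤ)]
  simp

end Residues

set_option linter.unusedSectionVars false

/-! ### Evaluation of products on product cells -/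

section Eval

variable {ι S : Type*} [DecidableEq ι] {m N J : ℕ} [NeZero m]

namespace CellSys

variable (C : CellSys S m N J) (ν : S → ZMod m)

/-- Cochains invariant under the action in every coordinate. -/
def Inv (F : List (ι → S) → ZMod m) : Prop := ∀ b, pullL (onCoord b C.t) F = F

/-- Functions which change by `1` under the action in coordinate `a` and by `-1` under the action
in coordinate `b`. -/
def Shift (lam : (ι → S) → ZMod m) (a b : ι) : Prop :=
  ∀ c y, lam (onCoord c C.t y) = lam y + (if c = a then 1 else 0) - (if c = b then 1 else 0)

/-- A cochain whose coboundary is the standard invariant `2`-cocycle of the coordinate `a`. -/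
def wst (a : ι) (x y : ι → S) : ZMod m := (carry (ν (x a)) (ν (y a)) : ℤ)

/-- A cochain whose coboundary is the `2`-cocycle attached to a pair of functions `lam`, `lam'`;
that coboundary vanishes on sequences on which `lam` or `lam'` is constant. -/
def wcov {Y : Type*} (lam lam' : Y → ZMod m) (x y : Y) : ZMod m :=
  ((carry (lam x) (lam' y) - carry (lam x) (lam' x) : ℤ) : ZMod m)

/-- The product of the `2`-cocycle attached to `lam`, `lam'` with a cochain. -/
def ycup {Y : Type*} (lam lam' : Y → ZMod m) (F : List Y → ZMod m) : List Y → ZMod m :=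
  cup2 (d1 (wcov lam lam')) F

lemma d1_wcov {Y : Type*} (lam lam' : Y → ZMod m) (x y z : Y) :
    d1 (wcov lam lam') x y z = ((carry (lam y) (lam' z) - carry (lam y) (lam' y)
      - carry (lam x) (lam' z) + carry (lam x) (lam' y) : ℤ) : ZMod m) := by
  simp only [d1, wcov]; push_cast; ring

lemma wcov_self {Y : Type*} (lam lam' : Y → ZMod m) (x : Y) : wcov lam lam' x x = 0 := by
  simp [wcov]

lemma ycup_coc {Y : Type*} (lam lam' : Y → ZMod m) {F : List Y → ZMod m} (hF : Coc F) :
    Coc (ycup lam lam' F) := hF.cup2 (wcov_self lam lam')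

/-- A function of residues invariant under the translation by `1` is constant. -/
lemma const_of_shift {M : Type*} (g : ZMod m → M) (h : ∀ e, g (e + 1) = g e) (e : ZMod m) :
    g e = g 0 := by
  rw [← ZMod.natCast_zmod_val e]
  induction e.val with
  | zero => simp
  | succ n ih => rw [← ih, Nat.cast_succ, h]

lemma ycup_inv {lam lam' : (ι → S) → ZMod m} {a b : ι} (h : C.Shift lam a b)
    (h' : C.Shift lam' a b) {F : List (ι → S) → ZMod m} (hF : C.Inv F) :
    C.Inv (ycup lam lam' F) := by
  intro c
  rw [ycup, pull_cup2, hF c]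
  congr 1
  funext x y z
  rw [d1_wcov, d1_wcov]
  congr 1
  have key := const_of_shift (fun e : ZMod m => carry (lam y + e) (lam' z + e)
    - carry (lam y + e) (lam' y + e) - carry (lam x + e) (lam' z + e)
    + carry (lam x + e) (lam' y + e)) ?_ ((if c = a then 1 else 0) - (if c = b then 1 else 0))
  · simp only [h c, h' c, add_sub_assoc]
    simpa using key
  · intro e
    simp only [← add_assoc]
    have h1 := carry_shift (lam y + e) (lam' z + e)
    have h2 := carry_shift (lam y + e) (lam' y + e)
    have h3 := carry_shift (lam x + e) (lam' z + e)
    have h4 := carry_shift (lam x + e) (lam' y + e)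
    linarith

lemma xcup_inv {lam : (ι → S) → ZMod m} {a b : ι} (h : C.Shift lam a b)
    {F : List (ι → S) → ZMod m} (hF : C.Inv F) : C.Inv (cup1 (d0 lam) F) := by
  intro c
  rw [pull_cup1, hF c]
  congr 1
  funext x y
  simp only [d0, h c]; ring

variable [Fintype ι]

section Standard

variable {C ν} (hν : ∀ x, ν (C.t x) = ν x + 1) {v₀ : S} (hv : v₀ ∈ C.Sk 0) {d : ι → ℕ}
  (hd : ∀ b, d b ≤ J) (a : ι)

include hν in
lemma nu_iter (i : ℕ) (x : S) : ν (C.t^[i] x) = ν x + i := by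
  induction i with
  | zero => simp
  | succ i ih => rw [Function.iterate_succ_apply', hν, ih]; push_cast; ring

lemma inv_iter {F : List (ι → S) → ZMod m} (hF : C.Inv F) (b : ι) (i : ℕ) :
    pullL ((onCoord b C.t)^[i]) F = F := by
  induction i with
  | zero => funext l; simp
  | succ i ih =>
    have : pullL ((onCoord b C.t)^[i + 1]) F = pullL (onCoord b C.t)
      (pullL ((onCoord b C.t)^[i]) F) := by funext l; simp
    rw [this, ih, hF b]

include hv hd in
lemma Zd_delta_inv {F : List (ι → S) → ZMod m} (hF : Nrm F) (h0 : F [] = 0) (hi : C.Inv F)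
    (a : ι) : C.Zd v₀ d (deltaL F) = 0 := by
  obtain ⟨sg, -, h⟩ := C.stokes (ZMod.natCast_self m) hv hd a
  have := h (d a) (hd a) F hF h0 (fun b _ => hi b)
  rw [Function.update_eq_self, eps_eq_zero _ (ZMod.natCast_self m) _ (hi a)] at this
  simpa using this

include hν hv hd in
/-- The operation of capping with the standard `1`-cocycle of the coordinate `a`. -/
lemma eval_nu : ∃ sg : ZMod m, sg * sg = 1 ∧ ∀ F : List (ι → S) → ZMod m, Coc F → C.Inv F → ∀ j ≤ J,
    (Odd j ∨ j = 0) →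
    C.Zd v₀ (Function.update d a j) (cup1 (d0 fun y => ν (y a)) F) =
      if j = 0 then 0 else sg * C.Zd v₀ (Function.update d a (j - 1)) F := by
  obtain ⟨sg, hsg, h⟩ := C.stokes (ZMod.natCast_self m) hv hd a
  refine ⟨sg, hsg, fun F hF hi j hj hj' => ?_⟩
  rw [← delta_cup0 hF, h j hj _ (cup0_nrm hF.nrm _) rfl]
  · split_ifs with h0
    · subst h0; rw [eps_zero, map_zero, mul_zero]
    · rw [eps_odd _ (by tauto)]
      congr 2
      simp only [lift]
      rw [pull_cup0, hi a]
      change cup0L F _ - cup0L F _ = F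
      rw [← map_sub]
      change cup0 _ F = F
      convert cup0_one hF.nil using 2
      funext y
      simp [onCoord_same, hν]
  · intro b hb
    rw [pull_cup0, hi b]
    simp [onCoord_ne hb.symm]

include hν hv hd in
/-- The operation of capping with the standard `2`-cocycle of the coordinate `a`. -/
lemma eval_wst {F : List (ι → S) → ZMod m} (hF : Coc F) (hi : C.Inv F) :
    C.Zd v₀ d (deltaL (cup1 (wst ν a) F)) =
      if 2 ≤ d a then - C.Zd v₀ (Function.update d a (d a - 2)) F else 0 := by
  obtain ⟨sg, hsg, h⟩ := C.stokes (ZMod.natCast_self m) hv hd a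
  have hst : ∀ b, b ≠ a → pullL (onCoord b C.t) (cup1 (wst ν a) F) = cup1 (wst ν a) F := by
    intro b hb
    rw [pull_cup1, hi b]
    simp only [wst, onCoord_ne hb.symm]
    rfl
  have h1 := h (d a) (hd a) (cup1 (wst ν a) F)
    (cup1_nrm hF.nrm fun x => by simp [wst, carry_self]) rfl hst
  rw [Function.update_eq_self] at h1
  rw [h1]
  rcases Nat.even_or_odd (d a) with he | ho
  · by_cases h0 : d a = 0
    · rw [h0, eps_zero]; simp
    rw [if_pos (by grind)]
    have hav : (C.lift a).eps (d a) (cup1 (wst ν a) F) = - cup1 (d0 fun y => ν (y a)) F := by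
      rw [eps_even _ he h0, avg, LinearMap.sum_apply]
      congr 1
      simp only [lift, pull_cup1, inv_iter hi a]
      change ∑ i ∈ _, cup1L F _ = _
      rw [← map_sum]
      change cup1 _ F = _
      congr 1
      funext x y
      simp only [Finset.sum_apply, wst, onCoord_iterate, onCoord_same, nu_iter hν, d0]
      rw [← Int.cast_sum, sum_carry]
      simp
    rw [hav, map_neg, ← delta_cup0 hF, h (d a - 1) (by have := hd a; omega) _
      (cup0_nrm hF.nrm _) rfl, eps_odd _ (by grind)]
    · have : pullL (C.lift a).t (cup0 (fun y => ν (y a)) F) - cup0 (fun y => ν (y a)) F = F := by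
        simp only [lift]
        rw [pull_cup0, hi a]
        change cup0L F _ - cup0L F _ = F
        rw [← map_sub]
        change cup0 _ F = F
        convert cup0_one hF.nil using 2
        funext y
        simp [onCoord_same, hν]
      rw [this, mul_neg, ← mul_assoc, hsg, one_mul]; rfl
    · intro b hb
      rw [pull_cup0, hi b]
      simp [onCoord_ne hb.symm]
  · have htr : (C.lift a).eps (d a) (cup1 (wst ν a) F) =
        cup1 (d0 fun y => ((lastInd (ν (y a)) : ℤ) : ZMod m)) F := by
      rw [eps_odd _ ho]
      simp only [lift, pull_cup1, hi a]
      change cup1L F _ - cup1L F _ = cup1L F _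
      rw [← map_sub]
      congr 1
      funext x y
      simp only [Pi.sub_apply, wst, onCoord_same, hν, d0, ← Int.cast_sub]
      rw [carry_shift]
    rw [htr, ← delta_cup0 hF, h (d a - 1) (by have := hd a; omega) _ (cup0_nrm hF.nrm _) rfl]
    · by_cases h1 : d a = 1
      · rw [h1]; simp [eps_zero]
      · rw [if_pos (by grind), eps_even _ (by grind) (by grind)]
        have : avg m (C.lift a).t (cup0 (fun y => ((lastInd (ν (y a)) : ℤ) : ZMod m)) F) = F := by
          rw [avg, LinearMap.sum_apply]
          simp only [lift, pull_cup0, inv_iter hi a]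
          change ∑ i ∈ _, cup0L F _ = _
          rw [← map_sum]
          change cup0 _ F = _
          convert cup0_one hF.nil using 2
          funext y
          simp only [Finset.sum_apply, onCoord_iterate, onCoord_same, nu_iter hν]
          rw [← Int.cast_sum, sum_lastInd]; simp
        rw [this, map_neg, mul_neg, mul_neg, ← mul_assoc, hsg, one_mul]; rfl
    · intro b hb
      rw [pull_cup0, hi b]
      simp [onCoord_ne hb.symm]

end Standard

end CellSys

end Eval

section Words

variable {ι S : Type*} [DecidableEq ι] {m N J : ℕ} [NeZero m]

namespace CellSys

variable {C : CellSys S m N J} {ν : S → ZMod m}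

/-- For functions `lam`, `lam'` with the same translation behaviour as `ν (y a) - ν (y b)`, the
cocycle attached to them differs from the difference of the standard cocycles of the coordinates
`a` and `b` by the coboundary of an invariant cochain. -/
lemma wcov_decomp (hν : ∀ x, ν (C.t x) = ν x + 1) {lam lam' : (ι → S) → ZMod m} {a b : ι}
    (h : C.Shift lam a b) (h' : C.Shift lam' a b) :
    ∃ (B : (ι → S) → (ι → S) → ZMod m) (θ : (ι → S) → ZMod m), (∀ x, B x x = 0) ∧
      (∀ c x y, B (onCoord c C.t x) (onCoord c C.t y) = B x y) ∧
      wcov lam lam' = wst ν a - wst ν b + B - d0 θ := by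
  have hm : (m : ℤ) ≠ 0 := by exact_mod_cast NeZero.ne m
  let mu : (ι → S) → ZMod m := fun y => lam' y - ν (y a) + ν (y b)
  have hdvd : ∀ y, (m : ℤ) ∣ (lam' y).val - (ν (y a)).val + (ν (y b)).val - (mu y).val := by
    intro y
    rw [← ZMod.intCast_zmod_eq_zero_iff_dvd]
    simp [mu]
  choose θ hθ using hdvd
  have hnu : ∀ a c (y : ι → S), ν (onCoord c C.t y a) = ν (y a) + if c = a then 1 else 0 := by
    intro a c y
    by_cases hc : c = a
    · subst hc; simp [onCoord_same, hν]
    · simp [onCoord_ne (Ne.symm hc), hc]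
  have hmu : ∀ c y, mu (onCoord c C.t y) = mu y := by
    intro c y
    simp only [mu, hnu, h' c y]; ring
  let Bz : (ι → S) → (ι → S) → ℤ := fun x y =>
    carry (lam x) (lam' y) - carry (lam x) (lam' x) - carry (ν (x a)) (ν (y a))
      + carry (ν (x b)) (ν (y b)) + θ y - θ x
  have hB : ∀ x y, (m : ℤ) * Bz x y = (lam' y - lam x).val - (lam' x - lam x).val
      - (ν (y a) - ν (x a)).val + (ν (y b) - ν (x b)).val - (mu y).val + (mu x).val := by
    intro x y
    simp only [Bz, mul_sub, mul_add, m_mul_carry, ← hθ]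
    ring
  refine ⟨fun x y => (Bz x y : ℤ), fun y => (θ y : ℤ), fun x => ?_, fun c x y => ?_, ?_⟩
  · simp [Bz, carry_self]
  · refine congrArg (Int.cast : ℤ → ZMod m) (mul_left_cancel₀ hm ?_)
    rw [hB, hB]
    simp only [h c, h' c, hmu, hnu, add_sub_add_right_eq_sub, sub_sub_sub_cancel_right]
  · funext x y
    simp only [wcov, wst, Bz, d0, Pi.add_apply, Pi.sub_apply]
    push_cast; ring

variable [Fintype ι]

/-- Evaluation of the product with the `2`-cocycle of a pair `(a, b)`: up to an invariant
coboundary it is the difference of the standard ones of `a` and `b`, each of which lowers the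
dimension in its coordinate by two and changes the sign. -/
lemma eval_ycup (hν : ∀ x, ν (C.t x) = ν x + 1) {v₀ : S} (hv : v₀ ∈ C.Sk 0) {d : ι → ℕ}
    (hd : ∀ b, d b ≤ J) {lam lam' : (ι → S) → ZMod m} {a b : ι}
    (h : C.Shift lam a b) (h' : C.Shift lam' a b) {F : List (ι → S) → ZMod m} (hF : Coc F)
    (hi : C.Inv F) :
    C.Zd v₀ d (ycup lam lam' F) =
      (if 2 ≤ d b then C.Zd v₀ (Function.update d b (d b - 2)) F else 0) -
      (if 2 ≤ d a then C.Zd v₀ (Function.update d a (d a - 2)) F else 0) := by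
  obtain ⟨B, θ, hB0, hB, e⟩ := wcov_decomp hν h h'
  have hz : C.Zd v₀ d (deltaL (cup1 B F)) = 0 := by
    refine Zd_delta_inv hv hd (cup1_nrm hF.nrm hB0) rfl (fun c => ?_) a
    rw [pull_cup1, hi c]
    simp only [hB]
  have e2 : deltaL (cup1 (wcov lam lam') F) = deltaL (cup1 (wst ν a) F) -
      deltaL (cup1 (wst ν b) F) + deltaL (cup1 B F) := by
    have : cup1 (wcov lam lam') F = cup1 (wst ν a) F - cup1 (wst ν b) F + cup1 B F
        - cup1 (d0 θ) F := by
      change cup1L F _ = cup1L F _ - cup1L F _ + cup1L F _ - cup1L F _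
      rw [← map_sub, ← map_add, ← map_sub, e]
    rw [this, map_sub, map_add, map_sub, delta_cup1 hF (d0 θ), d1_d0, cup2_zero, sub_zero]
  rw [ycup, ← delta_cup1 hF, e2, map_add, map_sub, hz, eval_wst hν hv hd a hF hi,
    eval_wst hν hv hd b hF hi]
  split_ifs <;> ring

/-- Evaluation of the product with the `1`-cocycle of a function `lam` with the same translation
behaviour as `ν (y a) - ν (y b)`. The sign does not depend on `lam` and `F`. -/
lemma eval_xcup (hν : ∀ x, ν (C.t x) = ν x + 1) {v₀ : S} (hv : v₀ ∈ C.Sk 0) {d : ι → ℕ}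
    (hd : ∀ b, d b ≤ J) {a b : ι} (ha : d a = 1) (hb : d b = 0) : ∃ sg : ZMod m, sg * sg = 1 ∧
    ∀ lam : (ι → S) → ZMod m, C.Shift lam a b → ∀ F : List (ι → S) → ZMod m, Coc F → C.Inv F →
      C.Zd v₀ d (cup1 (d0 lam) F) = sg * C.Zd v₀ (Function.update d a 0) F := by
  obtain ⟨sg, hsg, hs⟩ := eval_nu (C := C) (ι := ι) hν hv hd a
  obtain ⟨τ, -, ht⟩ := eval_nu (C := C) (ι := ι) hν hv hd b
  refine ⟨sg, hsg, fun lam h F hF hi => ?_⟩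
  let mu : (ι → S) → ZMod m := fun y => lam y - ν (y a) + ν (y b)
  have hnu : ∀ a c (y : ι → S), ν (onCoord c C.t y a) = ν (y a) + if c = a then 1 else 0 := by
    intro a c y
    by_cases hc : c = a
    · subst hc; simp [onCoord_same, hν]
    · simp [onCoord_ne (Ne.symm hc), hc]
  have hz : C.Zd v₀ d (cup1 (d0 mu) F) = 0 := by
    rw [← delta_cup0 hF]
    refine Zd_delta_inv hv hd (cup0_nrm hF.nrm _) rfl (fun c => ?_) a
    rw [pull_cup0, hi c]
    congr 1
    funext y
    simp only [mu, hnu, h c y]; ring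
  have e : cup1 (d0 lam) F = cup1 (d0 fun y => ν (y a)) F - cup1 (d0 fun y => ν (y b)) F
      + cup1 (d0 mu) F := by
    change cup1L F _ = cup1L F _ - cup1L F _ + cup1L F _
    rw [← map_sub, ← map_add]
    congr 1
    funext x y
    simp only [d0, mu, Pi.add_apply, Pi.sub_apply]; ring
  have h1 := hs F hF hi 1 (ha ▸ hd a) (by simp)
  have h2 := ht F hF hi 0 (by omega) (by simp)
  rw [← ha, Function.update_eq_self, ha] at h1
  rw [← hb, Function.update_eq_self] at h2
  rw [e, map_add, map_sub, h1, h2, hz]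
  simp [hb]

/-- The product of the `1`-cocycles attached to the pairs of coordinates in a list, where the
position `s` uses the function `c s`. -/
def wordX (c : ℕ → (ι → S) → ι → ZMod m) : ℕ → List (ι × ι) → List (ι → S) → ZMod m
  | _, [] => unitC
  | s, (a, b) :: Q => cup1 (d0 fun y => c s y a - c s y b) (wordX c (s + 1) Q)

/-- The product of the `2`-cocycles attached to the pairs of coordinates in a list `P` and the
`1`-cocycles attached to those in a list `Q`; a factor of degree two occupies two positions. -/
def wordY (c : ℕ → (ι → S) → ι → ZMod m) (Q : List (ι × ι)) :
    ℕ → List (ι × ι) → List (ι → S) → ZMod m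
  | s, [] => wordX c s Q
  | s, (a, b) :: P => ycup (fun y => c s y a - c s y b) (fun y => c (s + 1) y a - c (s + 1) y b)
      (wordY c Q (s + 2) P)

lemma wordX_vanish (c : ℕ → (ι → S) → ι → ZMod m) (Q : List (ι × ι)) (s i : ℕ) (hsi : s ≤ i)
    (hi : i < s + Q.length) (l : List (ι → S)) (h : ∀ y ∈ l, ∀ z ∈ l, c i y = c i z) :
    wordX c s Q l = 0 := by
  induction Q generalizing s l with
  | nil => simp at hi; omega
  | cons p Q ih =>
    obtain ⟨a, b⟩ := p
    rcases l with _ | ⟨x, _ | ⟨y, l⟩⟩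
    · rfl
    · rfl
    · simp only [wordX, cup1]
      by_cases his : i = s
      · subst his
        rw [d0, h x (by simp) y (by simp)]; simp
      · rw [ih (s + 1) (by omega) (by simp at hi; omega) (y :: l) (fun y' hy z hz =>
          h y' (List.mem_cons_of_mem _ hy) z (List.mem_cons_of_mem _ hz)), mul_zero]

/-- The product vanishes on a sequence as soon as the functions used in one of its positions are
constant on it. A factor of degree two vanishes if either of its two functions is constant. -/
lemma wordY_vanish (c : ℕ → (ι → S) → ι → ZMod m) (P Q : List (ι × ι)) (s i : ℕ) (hsi : s ≤ i)
    (hi : i < s + (2 * P.length + Q.length)) (l : List (ι → S))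
    (h : ∀ y ∈ l, ∀ z ∈ l, c i y = c i z) : wordY c Q s P l = 0 := by
  induction P generalizing s l with
  | nil => exact wordX_vanish c Q s i hsi (by simpa using hi) l h
  | cons p P ih =>
    obtain ⟨a, b⟩ := p
    rcases l with _ | ⟨x, _ | ⟨y, _ | ⟨z, l⟩⟩⟩
    · rfl
    · rfl
    · rfl
    · simp only [wordY, ycup, cup2]
      by_cases his : i = s
      · subst his
        rw [d1_wcov, h x (by simp) y (by simp)]; simp
      · by_cases his : i = s + 1
        · subst his
          rw [d1_wcov, h z (by simp) y (by simp)]; simp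
        · rw [ih (s + 2) (by omega) (by simp at hi; omega) (z :: l) (fun y' hy z hz =>
            h y' (by simp_all) z (by simp_all)), mul_zero]

variable (C) in
/-- Compatibility of the functions `c` with the action. -/
def Compat (c : ℕ → (ι → S) → ι → ZMod m) : Prop :=
  ∀ s a b, C.Shift (fun y => c s y a - c s y b) a b

lemma wordX_coc (c : ℕ → (ι → S) → ι → ZMod m) (s : ℕ) (Q : List (ι × ι)) :
    Coc (wordX c s Q) := by
  induction Q generalizing s with
  | nil => exact coc_unitC
  | cons p Q ih => exact (ih (s + 1)).cup1 _

lemma wordX_inv {c : ℕ → (ι → S) → ι → ZMod m} (hc : C.Compat c) (s : ℕ) (Q : List (ι × ι)) :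
    C.Inv (wordX c s Q) := by
  induction Q generalizing s with
  | nil => exact fun b => pull_unitC _
  | cons p Q ih => exact xcup_inv C (hc s p.1 p.2) (ih (s + 1))

lemma wordY_coc (c : ℕ → (ι → S) → ι → ZMod m) (s : ℕ) (P Q : List (ι × ι)) :
    Coc (wordY c Q s P) := by
  induction P generalizing s with
  | nil => exact wordX_coc c s Q
  | cons p P ih => exact ycup_coc _ _ (ih (s + 2))

lemma wordY_inv {c : ℕ → (ι → S) → ι → ZMod m} (hc : C.Compat c) (s : ℕ) (P Q : List (ι × ι)) :
    C.Inv (wordY c Q s P) := by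
  induction P generalizing s with
  | nil => exact wordX_inv hc s Q
  | cons p P ih => exact ycup_inv C (hc s p.1 p.2) (hc (s + 1) p.1 p.2) (ih (s + 2))

section EvalWords

variable (hν : ∀ x, ν (C.t x) = ν x + 1) {v₀ : S} (hv : v₀ ∈ C.Sk 0)
  {c : ℕ → (ι → S) → ι → ZMod m} (hc : C.Compat c)

include hν hv hc

/-- The product of the `1`-cocycles attached to the pairs `(a, z)`, `a ∈ A`, has a unit value on the
product of the `1`-cells in the coordinates in `A`. -/
lemma eval_wordX {d : ι → ℕ} (hd : ∀ b, d b ≤ J) (z : ι) (hz : d z = 0) (A : List ι)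
    (hA : A.Nodup) (h1 : ∀ a ∈ A, d a = 1) (h0 : ∀ a ∉ A, d a = 0) :
    ∃ X : ZMod m, X * X = 1 ∧ ∀ s, C.Zd v₀ d (wordX c s (A.map fun a => (a, z))) = X := by
  induction A generalizing d with
  | nil =>
    refine ⟨1, by simp, fun s => ?_⟩
    have : ∀ L : List ι, C.Zs d L (unitC : List (ι → S) → ZMod m) = unitC := by
      intro L
      induction L with
      | nil => rfl
      | cons a L ih => rw [Zs_cons, ih, h0 a (by simp)]; rfl
    rw [Zd_apply]
    simp only [List.map_nil, wordX]
    rw [this]; rfl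
  | cons a A ih =>
    obtain ⟨haA, hA'⟩ := List.nodup_cons.1 hA
    obtain ⟨sg, hsg, h⟩ := eval_xcup (C := C) hν hv hd (h1 a (by simp)) hz
    have hd' : ∀ b, Function.update d a 0 b ≤ J := by
      intro b
      by_cases hb : b = a
      · subst hb; simp
      · simpa [hb] using hd b
    have hz' : Function.update d a 0 z = 0 := by
      by_cases hb : z = a
      · subst hb; simp
      · simpa [hb] using hz
    have h1' : ∀ b ∈ A, Function.update d a 0 b = 1 := by
      intro b hb
      have : b ≠ a := by rintro rfl; exact haA hb
      simpa [this] using h1 b (by simp [hb])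
    have h0' : ∀ b ∉ A, Function.update d a 0 b = 0 := by
      intro b hb
      by_cases hba : b = a
      · subst hba; simp
      · simpa [hba] using h0 b (by simp [hb, hba])
    obtain ⟨X, hX, h'⟩ := ih hd' hz' hA' h1' h0'
    refine ⟨sg * X, by rw [mul_mul_mul_comm, hsg, hX, one_mul], fun s => ?_⟩
    rw [List.map_cons, wordX, h _ (hc s a z) _ (wordX_coc _ _ _) (wordX_inv hc _ _), h']

/-- The product with the `(p + q)`-th power of the `2`-cocycle of a pair `(a, b)`: of these factors,
`p` have to lower the dimension in the coordinate `a` and `q` in the coordinate `b`. -/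
lemma eval_block (P Q : List (ι × ι)) {a b : ι} (hab : a ≠ b) {e e' : ℕ} (he : e ≤ 1)
    (he' : e' ≤ 1) {X : ZMod m} (L : ℕ) {d : ι → ℕ} (hd : ∀ b, d b ≤ J)
    (hX : ∀ s, C.Zd v₀ (Function.update (Function.update d a e) b e') (wordY c Q s P) = X)
    (p q : ℕ) (hp : d a = 2 * p + e) (hq : d b = 2 * q + e') (hL : p + q = L) (s : ℕ) :
    C.Zd v₀ d (wordY c Q s (List.replicate L (a, b) ++ P)) = (-1) ^ p * (L.choose p) * X := by
  induction L generalizing d p q s with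
  | zero =>
    obtain ⟨rfl, rfl⟩ : p = 0 ∧ q = 0 := by omega
    have h1 : Function.update (Function.update d a e) b e' = d := by
      rw [show e = d a by omega, show e' = d b by omega]; simp
    rw [h1] at hX
    simp [hX]
  | succ L ih =>
    have hupd : ∀ (i : ι) (j : ℕ), j ≤ d i → ∀ x, Function.update d i j x ≤ J := by
      intro i j hj x
      by_cases hx : x = i
      · subst hx; simpa using hj.trans (hd x)
      · simpa [hx] using hd x
    have hb : (if 2 ≤ d b then C.Zd v₀ (Function.update d b (d b - 2))
        (wordY c Q (s + 2) (List.replicate L (a, b) ++ P)) else 0)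
        = (-1) ^ p * (L.choose p) * X := by
      rcases q with _ | q
      · rw [if_neg (by omega), Nat.choose_eq_zero_of_lt (by omega)]; simp
      · rw [if_pos (by omega)]
        refine ih (hupd _ _ (by omega)) (fun s => ?_) p q ?_ ?_ (by omega) (s + 2)
        · rw [Function.update_comm hab, Function.update_idem, Function.update_comm hab.symm]
          exact hX s
        · simp [hab, hp]
        · simp [hq]; omega
    have ha : (if 2 ≤ d a then C.Zd v₀ (Function.update d a (d a - 2))
        (wordY c Q (s + 2) (List.replicate L (a, b) ++ P)) else 0)
        = if p = 0 then 0 else (-1) ^ (p - 1) * (L.choose (p - 1)) * X := by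
      rcases p with _ | p
      · rw [if_neg (by omega), if_pos rfl]
      · rw [if_pos (by omega), if_neg (by omega)]
        refine ih (hupd _ _ (by omega)) (fun s => ?_) p q ?_ ?_ (by omega) (s + 2)
        · rw [Function.update_idem]
          exact hX s
        · simp [hp]; omega
        · simp [hab.symm, hq]
    rw [List.replicate_succ, List.cons_append, wordY, eval_ycup hν hv hd (hc s a b)
      (hc (s + 1) a b) (wordY_coc _ _ _ _) (wordY_inv hc _ _ _), ha, hb]
    rcases p with _ | p
    · simp
    · rw [if_neg (by omega), Nat.choose_succ_succ, Nat.add_sub_cancel]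
      push_cast; ring

/-- The product with the `(p + q)`-th powers of the `2`-cocycles of the pairs in a list of disjoint
pairs. -/
lemma eval_blocks (P Q : List (ι × ι)) {e : ι → ℕ} (he : ∀ i, e i ≤ 1) {X : ZMod m} (p q : ℕ)
    (bl : List (ι × ι)) (hne : ∀ x ∈ bl, x.1 ≠ x.2)
    (hbl : bl.Pairwise fun x y => x.1 ≠ y.1 ∧ x.1 ≠ y.2 ∧ x.2 ≠ y.1 ∧ x.2 ≠ y.2)
    {d : ι → ℕ} (hd : ∀ b, d b ≤ J)
    (hX : ∀ d' : ι → ℕ, (∀ b, d' b ≤ J) → (∀ x ∈ bl, d' x.1 = e x.1 ∧ d' x.2 = e x.2) →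
      (∀ i, (∀ x ∈ bl, i ≠ x.1 ∧ i ≠ x.2) → d' i = d i) →
      ∀ s, C.Zd v₀ d' (wordY c Q s P) = X)
    (h1 : ∀ x ∈ bl, d x.1 = 2 * p + e x.1) (h2 : ∀ x ∈ bl, d x.2 = 2 * q + e x.2) (s : ℕ) :
    C.Zd v₀ d (wordY c Q s (bl.flatMap (fun x => List.replicate (p + q) x) ++ P)) =
      ((-1) ^ p * ((p + q).choose p)) ^ bl.length * X := by
  induction bl generalizing d s with
  | nil => simpa using hX d hd (by simp) (by simp) s
  | cons x bl ih =>
    obtain ⟨a, b⟩ := x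
    have hab : a ≠ b := hne (a, b) (by simp)
    rw [List.pairwise_cons] at hbl
    have hda := h1 (a, b) (by simp)
    have hdb := h2 (a, b) (by simp)
    simp only at hda hdb
    rw [List.flatMap_cons, List.append_assoc,
      eval_block hν hv hc _ Q hab (he a) (he b)
        (X := ((-1) ^ p * ((p + q).choose p)) ^ bl.length * X) (p + q) hd (fun s => ?_) p q
        hda hdb rfl s]
    · rw [List.length_cons]; ring
    · have hd' : ∀ i, Function.update (Function.update d a (e a)) b (e b) i ≤ d i := by
        intro i
        by_cases hib : i = b
        · subst hib; simp; omega
        · by_cases hia : i = a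
          · subst hia; simp [hib]; omega
          · simp [hia, hib]
      have hoth : ∀ x ∈ bl, (x.1 ≠ a ∧ x.1 ≠ b) ∧ x.2 ≠ a ∧ x.2 ≠ b := by
        intro x hx
        have := hbl.1 x hx
        simp only at this
        exact ⟨⟨this.1.symm, this.2.2.1.symm⟩, this.2.1.symm, this.2.2.2.symm⟩
      refine ih (fun x hx => hne x (by simp [hx])) hbl.2 (fun i => (hd' i).trans (hd i)) ?_ ?_ ?_ s
      · intro d' hd'J hin hout s
        refine hX d' hd'J ?_ ?_ s
        · intro x hx
          rcases List.mem_cons.1 hx with rfl | hx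
          · simp only
            rw [hout a fun y hy => ⟨(hoth y hy).1.1.symm, (hoth y hy).2.1.symm⟩,
              hout b fun y hy => ⟨(hoth y hy).1.2.symm, (hoth y hy).2.2.symm⟩]
            simp [hab]
          · exact hin x hx
        · intro i hi
          have h3 := hi (a, b) (by simp)
          rw [hout i fun y hy => hi y (by simp [hy])]
          simp [h3.1, h3.2]
      · intro x hx
        have := hoth x hx
        simp [this, h1 x (by simp [hx])]
      · intro x hx
        have := hoth x hx
        simp [this, h2 x (by simp [hx])]

end EvalWords

end CellSys

end Words

/-! ### The products of top degree -/

section Top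

variable {S : Type*} {m N n : ℕ} [NeZero m]

namespace CellSys

/-- The pairs `(0, 1), (2, 3), …` of coordinates. -/
def blk (k : ℕ) : List (Fin k × Fin k) :=
  (List.finRange (k / 2)).map fun i : Fin (k / 2) =>
    (⟨2 * (i : ℕ), by have := i.2; omega⟩, ⟨2 * (i : ℕ) + 1, by have := i.2; omega⟩)

lemma length_blk (k : ℕ) : (blk k).length = k / 2 := by simp [blk]

lemma mem_blk {k : ℕ} {x : Fin k × Fin k} (hx : x ∈ blk k) :
    ∃ i < k / 2, (x.1 : ℕ) = 2 * i ∧ (x.2 : ℕ) = 2 * i + 1 := by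
  simp only [blk, List.mem_map] at hx
  obtain ⟨i, -, rfl⟩ := hx
  exact ⟨i, i.2, rfl, rfl⟩

lemma exists_blk {k : ℕ} {i : Fin k} (h : (i : ℕ) / 2 < k / 2) :
    ∃ x ∈ blk k, i = x.1 ∨ i = x.2 := by
  refine ⟨(⟨2 * ((i : ℕ) / 2), by omega⟩, ⟨2 * ((i : ℕ) / 2) + 1, by omega⟩), ?_, ?_⟩
  · simp only [blk, List.mem_map]
    exact ⟨⟨i / 2, h⟩, List.mem_finRange _, rfl⟩
  · simp only [Fin.ext_iff]; omega

lemma pairwise_blk (k : ℕ) :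
    (blk k).Pairwise fun x y => x.1 ≠ y.1 ∧ x.1 ≠ y.2 ∧ x.2 ≠ y.1 ∧ x.2 ≠ y.2 := by
  rw [blk, List.pairwise_map]
  refine (List.nodup_finRange _).imp fun {i j} hij => ?_
  have : (i : ℕ) ≠ j := fun h => hij (Fin.ext h)
  simp only [ne_eq, Fin.ext_iff]
  omega

/-- For every compatible system of functions there is a product of degree `k (l + l' + 1) - 1`
(for `k` even), respectively `(k - 1) (l + l') + k + 2 n - 1` (for `k` odd), whose value on some
product cell is a unit times a power of a binomial coefficient. -/
theorem exists_eval {C : CellSys S m N (2 * n + 1)} {ν : S → ZMod m}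
    (hν : ∀ x, ν (C.t x) = ν x + 1) {v₀ : S} (hv : v₀ ∈ C.Sk 0) {k : ℕ} (hk : 2 ≤ k)
    {c : ℕ → (Fin k → S) → Fin k → ZMod m} (hc : C.Compat c) {l l' : ℕ} (hl : l ≤ n)
    (hl' : l' ≤ n) : ∃ (d : Fin k → ℕ) (P Q : List (Fin k × Fin k)) (X : ZMod m),
      (∀ b, d b ≤ 2 * n + 1) ∧ X * X = 1 ∧
      2 * P.length + Q.length =
        (if Even k then k * (l + l') + (k - 1) else (k - 1) * (l + l') + 2 * n + (k - 1)) ∧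
      C.Zd v₀ d (wordY c Q 0 P) = ((l + l').choose l' : ZMod m) ^ (k / 2) * X := by
  have hm1 : ∀ i : ℕ, ((-1 : ZMod m) ^ i) * (-1) ^ i = 1 := fun i => by rw [← mul_pow]; simp
  set z : Fin k := ⟨k - 1, by omega⟩ with hz
  let e : Fin k → ℕ := fun i => if i = z then 0 else 1
  have he : ∀ i, e i ≤ 1 := fun i => by simp only [e]; split_ifs <;> omega
  have hez : e z = 0 := by simp [e]
  let A := (List.finRange k).erase z
  have hAn : A.Nodup := (List.nodup_finRange k).erase z
  have hA : ∀ a, a ∈ A ↔ a ≠ z := fun a => by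
    rw [(List.nodup_finRange k).mem_erase_iff]; simp
  have hAlen : A.length = k - 1 := by
    rw [List.length_erase_of_mem (List.mem_finRange z)]; simp
  obtain ⟨X, hX, hXs⟩ := eval_wordX (C := C) (d := e) hν hv hc (fun b => (he b).trans (by omega)) z
    hez A hAn (fun a ha => by simp [e, (hA a).1 ha]) (fun a ha => by
      have : a = z := by simpa [hA] using ha
      simp [e, this])
  have hne : ∀ x ∈ blk k, x.1 ≠ x.2 := by
    intro x hx h
    obtain ⟨i, hi, h1, h2⟩ := mem_blk hx
    rw [h] at h1; omega
  have hev : ∀ x ∈ blk k, Even (x.1 : ℕ) ∧ ¬ Even (x.2 : ℕ) := by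
    intro x hx
    obtain ⟨i, hi, h1, h2⟩ := mem_blk hx
    rw [h1, h2]; grind
  by_cases hke : Even k
  · let d : Fin k → ℕ := fun i => (if Even (i : ℕ) then 2 * l' else 2 * l) + e i
    have hd : ∀ b, d b ≤ 2 * n + 1 := by
      intro b
      have := he b
      simp only [d]; split_ifs <;> omega
    refine ⟨d, (blk k).flatMap (fun x => List.replicate (l' + l) x) ++ [], A.map fun a => (a, z),
      ((-1) ^ l') ^ (k / 2) * X, hd, ?_, ?_, ?_⟩
    · rw [mul_mul_mul_comm, hX, ← mul_pow, hm1]; simp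
    · rw [if_pos hke]
      simp only [List.append_nil, List.length_flatMap, List.length_replicate, List.map_const',
        List.sum_replicate, length_blk, List.length_map, hAlen, smul_eq_mul]
      obtain ⟨r, rfl⟩ := hke
      rw [show (r + r) / 2 = r by omega]; ring
    · rw [eval_blocks hν hv hc [] _ he (X := X) l' l (blk k) hne (pairwise_blk k) hd, length_blk,
        Nat.add_comm l' l]
      · ring
      · intro d' _ hin _ s
        have : d' = e := by
          funext i
          obtain ⟨x, hx, rfl | rfl⟩ := exists_blk (i := i) (by have := i.2; grind)
          · exact (hin x hx).1
          · exact (hin x hx).2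
        rw [this]; exact hXs s
      · intro x hx
        simp [d, hev x hx]
      · intro x hx
        simp only [d, if_neg (hev x hx).2]
  · let d : Fin k → ℕ := fun i => if i = z then 2 * n else
      (if Even (i : ℕ) then 2 * l' else 2 * l) + e i
    have hd : ∀ b, d b ≤ 2 * n + 1 := by
      intro b
      have := he b
      simp only [d]; split_ifs <;> omega
    have hbz : ∀ x ∈ blk k, x.1 ≠ z ∧ x.2 ≠ z := by
      intro x hx
      obtain ⟨i, hi, h1, h2⟩ := mem_blk hx
      simp only [ne_eq, Fin.ext_iff, h1, h2, hz]
      constructor <;> grind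
    set o : Fin k := ⟨0, by omega⟩ with ho
    have hzo : z ≠ o := by simp only [ne_eq, Fin.ext_iff, hz, ho]; omega
    refine ⟨d, (blk k).flatMap (fun x => List.replicate (l' + l) x) ++
      (List.replicate n (z, o) ++ []), A.map fun a => (a, z),
      ((-1) ^ l') ^ (k / 2) * ((-1) ^ n * (n.choose n) * X), hd, ?_, ?_, ?_⟩
    · rw [mul_mul_mul_comm, mul_mul_mul_comm _ X, hX, ← mul_pow, hm1, Nat.choose_self,
        mul_mul_mul_comm, hm1]; simp
    · rw [if_neg hke]
      simp only [List.append_nil, List.length_append, List.length_flatMap, List.length_replicate,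
        List.map_const', List.sum_replicate, length_blk, List.length_map, hAlen, smul_eq_mul]
      obtain ⟨r, rfl⟩ := Nat.not_even_iff_odd.1 hke
      rw [show (2 * r + 1) / 2 = r by omega, show 2 * r + 1 - 1 = 2 * r by omega]; ring
    · rw [eval_blocks hν hv hc _ _ he (X := (-1) ^ n * (n.choose n) * X) l' l (blk k) hne
        (pairwise_blk k) hd, length_blk, Nat.add_comm l' l]
      · ring
      · intro d' hd' hin hout s
        have hdz : d' z = 2 * n := by
          rw [hout z fun x hx => ⟨(hbz x hx).1.symm, (hbz x hx).2.symm⟩]; simp [d]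
        have hdi : ∀ i, i ≠ z → d' i = e i := by
          intro i hi
          have : (i : ℕ) ≠ k - 1 := fun h => hi (Fin.ext h)
          obtain ⟨x, hx, rfl | rfl⟩ := exists_blk (i := i) (by have := i.2; grind)
          · exact (hin x hx).1
          · exact (hin x hx).2
        refine eval_block hν hv hc [] _ hzo (e := 0) (e' := 1) (by omega) le_rfl n hd' ?_ n 0
          (by simpa using hdz) ?_ (by omega) s
        · intro s
          have : Function.update (Function.update d' z 0) o 1 = e := by
            funext i
            by_cases h1 : i = o
            · rw [h1]; simp [e, hzo.symm]
            · by_cases h2 : i = z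
              · rw [h2]; simp [hzo, hez]
              · simp [h1, h2, hdi]
          rw [this]; exact hXs s
        · rw [hdi o hzo.symm]; simp [e, hzo.symm]
      · intro x hx
        simp [d, hev x hx, hbz x hx]
      · intro x hx
        simp only [d, if_neg (hev x hx).2, if_neg (hbz x hx).2]

end CellSys

end Top

/-! ### The cell structure of the sphere -/

section Sphere

/-- The unit sphere in `ℂ ^ (n + 1)`. -/
abbrev Sph (n : ℕ) : Type := Metric.sphere (0 : EuclideanSpace ℂ (Fin (n + 1))) 1

variable {n : ℕ}

namespace Sph

lemma ext' {x y : Sph n} (h : ∀ i, x.1 i = y.1 i) : x = y :=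
  Subtype.ext (by ext i; exact h i)

lemma norm_eq (x : Sph n) : ‖x.1‖ = 1 := by simp

/-- Scalar multiplication by a complex number of modulus one. -/
noncomputable def scal (z : ℂ) (hz : ‖z‖ = 1) (x : Sph n) : Sph n :=
  ⟨z • x.1, by simp [norm_smul, hz]⟩

lemma scal_apply (z : ℂ) (hz : ‖z‖ = 1) (x : Sph n) (i) : (scal z hz x).1 i = z * x.1 i := rfl

lemma dist_scal (z : ℂ) (hz : ‖z‖ = 1) (x y : Sph n) :
    dist (scal z hz x) (scal z hz y) = dist x y := by
  simp only [Subtype.dist_eq, scal, dist_smul₀, hz, one_mul]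

/-- Multiplication of one coordinate by a complex number. -/
noncomputable def rotV (q : Fin (n + 1)) (z : ℂ) (x : EuclideanSpace ℂ (Fin (n + 1))) :
    EuclideanSpace ℂ (Fin (n + 1)) :=
  WithLp.toLp 2 fun i => if i = q then z * x i else x i

lemma norm_rotV (q : Fin (n + 1)) {z : ℂ} (hz : ‖z‖ = 1) (x : EuclideanSpace ℂ (Fin (n + 1))) :
    ‖rotV q z x‖ = ‖x‖ := by
  rw [EuclideanSpace.norm_eq, EuclideanSpace.norm_eq]
  congr 1
  refine Finset.sum_congr rfl fun i _ => ?_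
  simp only [rotV]
  split_ifs <;> simp [hz]

lemma rotV_sub (q : Fin (n + 1)) (z : ℂ) (x y : EuclideanSpace ℂ (Fin (n + 1))) :
    rotV q z x - rotV q z y = rotV q z (x - y) := by
  ext i
  simp only [rotV, PiLp.sub_apply]
  split_ifs <;> ring

/-- Rotation of the coordinate `q` by the angle `θ`. -/
noncomputable def rot (q : Fin (n + 1)) (θ : ℝ) (x : Sph n) : Sph n :=
  ⟨rotV q (Complex.exp (θ * Complex.I)) x.1, by
    simp [norm_rotV q (Complex.norm_exp_ofReal_mul_I θ)]⟩

lemma rot_apply (q : Fin (n + 1)) (θ : ℝ) (x : Sph n) (i) :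
    (rot q θ x).1 i = if i = q then Complex.exp (θ * Complex.I) * x.1 i else x.1 i := rfl

lemma coord_le (x : Sph n) (q) : ‖x.1 q‖ ≤ 1 := by
  exact (PiLp.norm_apply_le x.1 q).trans x.norm_eq.le

lemma dist_rot (q : Fin (n + 1)) (θ θ' : ℝ) (x y : Sph n) :
    dist (rot q θ x) (rot q θ' y) ≤ dist x y + |θ - θ'| := by
  refine (dist_triangle _ (rot q θ y) _).trans (add_le_add (le_of_eq ?_) ?_)
  · rw [Subtype.dist_eq, Subtype.dist_eq, dist_eq_norm, dist_eq_norm]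
    simp only [rot]
    rw [rotV_sub, norm_rotV _ (Complex.norm_exp_ofReal_mul_I θ)]
  · rw [Subtype.dist_eq, dist_eq_norm]
    have : (rot q θ y).1 - (rot q θ' y).1 = EuclideanSpace.single q
        ((Complex.exp (θ * Complex.I) - Complex.exp (θ' * Complex.I)) * y.1 q) := by
      ext i
      simp only [PiLp.sub_apply, rot_apply]
      by_cases h : i = q
      · subst h; simp; ring
      · simp [h]
    rw [this, PiLp.norm_single, norm_mul]
    have h1 : ‖Complex.exp (θ * Complex.I) - Complex.exp (θ' * Complex.I)‖ ≤ |θ - θ'| := by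
      have h2 : Complex.exp (θ * Complex.I) - Complex.exp (θ' * Complex.I) =
          Complex.exp (θ' * Complex.I) * (Complex.exp (Complex.I * ((θ - θ' : ℝ) : ℂ)) - 1) := by
        rw [mul_sub, ← Complex.exp_add]; push_cast; ring_nf
      rw [h2, norm_mul, Complex.norm_exp_ofReal_mul_I, one_mul]
      exact (Real.norm_exp_I_mul_ofReal_sub_one_le).trans (by simp)
    calc _ ≤ |θ - θ'| * 1 := mul_le_mul h1 (coord_le y q) (norm_nonneg _) (abs_nonneg _)
      _ = _ := mul_one _

/-- The point `cos θ • x + sin θ • e_q`. -/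
noncomputable def coneV (q : Fin (n + 1)) (θ : ℝ) (x : EuclideanSpace ℂ (Fin (n + 1))) :
    EuclideanSpace ℂ (Fin (n + 1)) :=
  (Real.cos θ : ℂ) • x + EuclideanSpace.single q (Real.sin θ : ℂ)

lemma norm_coneV (q : Fin (n + 1)) (θ : ℝ) (x : Sph n) (hx : x.1 q = 0) :
    ‖coneV q θ x.1‖ = 1 := by
  have h := norm_add_sq_eq_norm_sq_add_norm_sq_of_inner_eq_zero (𝕜 := ℂ) ((Real.cos θ : ℂ) • x.1)
    (EuclideanSpace.single q (Real.sin θ : ℂ)) (by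
      rw [inner_smul_left, EuclideanSpace.inner_single_right, hx]; simp)
  rw [norm_smul, x.norm_eq, PiLp.norm_single] at h
  have h2 : ‖coneV q θ x.1‖ * ‖coneV q θ x.1‖ = 1 := by
    rw [coneV, h]
    simp only [Complex.norm_real, Real.norm_eq_abs, mul_one, abs_mul_abs_self]
    nlinarith [Real.sin_sq_add_cos_sq θ]
  nlinarith [norm_nonneg (coneV q θ x.1)]

open Classical in
/-- The homotopy contracting the points with vanishing coordinate `q` to the basis vector `e_q`
along great circles. The remaining points are fixed; they play no role. -/
noncomputable def cone (q : Fin (n + 1)) (θ : ℝ) (x : Sph n) : Sph n :=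
  if h : x.1 q = 0 then ⟨coneV q θ x.1, by simpa using norm_coneV q θ x h⟩ else x

lemma cone_apply (q : Fin (n + 1)) (θ : ℝ) (x : Sph n) (hx : x.1 q = 0) (i) :
    (cone q θ x).1 i = if i = q then (Real.sin θ : ℂ) else (Real.cos θ : ℂ) * x.1 i := by
  rw [cone, dif_pos hx]
  by_cases h : i = q
  · subst h; simp [coneV, hx]
  · simp [coneV, h]

lemma dist_cone (q : Fin (n + 1)) (θ θ' : ℝ) (x y : Sph n) (hx : x.1 q = 0) (hy : y.1 q = 0) :
    dist (cone q θ x) (cone q θ' y) ≤ dist x y + 2 * |θ - θ'| := by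
  refine (dist_triangle _ (cone q θ y) _).trans (add_le_add ?_ ?_)
  · rw [Subtype.dist_eq, Subtype.dist_eq]
    simp only [cone, dif_pos hx, dif_pos hy, coneV]
    rw [dist_add_right, dist_smul₀]
    refine mul_le_of_le_one_left dist_nonneg ?_
    rw [Complex.norm_real]; exact Real.abs_cos_le_one θ
  · rw [Subtype.dist_eq, dist_eq_norm]
    have : (cone q θ y).1 - (cone q θ' y).1 =
        ((Real.cos θ - Real.cos θ' : ℝ) : ℂ) • y.1 +
        EuclideanSpace.single q ((Real.sin θ - Real.sin θ' : ℝ) : ℂ) := by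
      ext i
      simp only [cone, dif_pos hy, coneV]
      by_cases h : i = q
      · subst h; simp [hy]
      · simp [h]; ring
    rw [this]
    refine (norm_add_le _ _).trans ?_
    rw [norm_smul, y.norm_eq, PiLp.norm_single, Complex.norm_real, Complex.norm_real,
      mul_one, two_mul]
    refine add_le_add ?_ ?_
    · simpa [Real.dist_eq] using Real.lipschitzWith_cos.dist_le_mul θ θ'
    · simpa [Real.dist_eq] using Real.lipschitzWith_sin.dist_le_mul θ θ'

/-- The base point. -/
noncomputable def base (n : ℕ) : Sph n := ⟨EuclideanSpace.single 0 1, by simp⟩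

/-- The primitive root of unity `exp (2 π i / m)`. -/
noncomputable def zt (m : ℕ) : ℂ := Complex.exp (((2 * Real.pi / m : ℝ) : ℂ) * Complex.I)

lemma norm_zt (m : ℕ) : ‖zt m‖ = 1 := Complex.norm_exp_ofReal_mul_I _

lemma zt_prim (m : ℕ) [NeZero m] : IsPrimitiveRoot (zt m) m := by
  have := Complex.isPrimitiveRoot_exp m (NeZero.ne m)
  rw [zt]
  convert this using 2
  push_cast; ring

/-- The generator of the deck transformation group of the lens space. -/
noncomputable def tr (m : ℕ) : Sph n → Sph n := scal (zt m) (norm_zt m)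

lemma tr_apply (m : ℕ) (x : Sph n) (i) : (tr m x).1 i = zt m * x.1 i := rfl

lemma tr_iter (m : ℕ) (x : Sph n) (e : ℕ) (i) : ((tr m)^[e] x).1 i = zt m ^ e * x.1 i := by
  induction e with
  | zero => simp
  | succ e ih => rw [Function.iterate_succ_apply', tr_apply, ih]; ring

/-- The skeleta: the vectors all of whose coordinates of index larger than `j / 2` vanish. In even
dimensions `j > 0` this is larger than the usual skeleton, which is harmless. -/
def skel (n : ℕ) (j : ℕ) : Set (Sph n) :=
  {x | (j = 0 → x = base n) ∧ ∀ i : Fin (n + 1), j / 2 < i → x.1 i = 0}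

/-- The homotopies sweeping out the cells, discretized with `N` steps. -/
noncomputable def hom (m n N j s : ℕ) : Sph n → Sph n :=
  open Classical in
  if Odd j then rot (Fin.ofNat (n + 1) (j / 2)) (2 * Real.pi / m * (s / N))
  else cone (Fin.ofNat (n + 1) (j / 2)) (Real.pi / 2 * (s / N))

lemma hom_odd (m N : ℕ) {j : ℕ} (hj : Odd j) (s : ℕ) :
    hom m n N j s = rot (Fin.ofNat (n + 1) (j / 2)) (2 * Real.pi / m * (s / N)) := if_pos hj

lemma hom_even (m N : ℕ) {j : ℕ} (hj : Even j) (s : ℕ) :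
    hom m n N j s = cone (Fin.ofNat (n + 1) (j / 2)) (Real.pi / 2 * (s / N)) :=
  if_neg (by simpa using hj)

lemma ofNat_val {q : ℕ} (hq : q ≤ n) : ((Fin.ofNat (n + 1) q : Fin (n + 1)) : ℕ) = q := by
  simp [Nat.mod_eq_of_lt (Nat.lt_succ_of_le hq)]

lemma skel_zero_of_odd {j q : ℕ} {x : Sph n} (hx : x ∈ skel n j) (hq : q ≤ n) (h : j / 2 < q) :
    x.1 (Fin.ofNat (n + 1) q) = 0 := hx.2 _ (by rw [ofNat_val hq]; exact h)

/-- The equivariant cell structure of the sphere. -/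
noncomputable def cells (m n N : ℕ) [NeZero m] [NeZero N] : CellSys (Sph n) m N (2 * n + 1) where
  t := tr m
  f := hom m n N
  Sk := skel n
  t_pow y := ext' fun i => by rw [tr_iter, (zt_prim m).pow_eq_one, one_mul]
  t_mem j y hj hy := ⟨by rintro rfl; simp at hj, fun i hi => by rw [tr_apply, hy.2 i hi, mul_zero]⟩
  f_mem j s y hj hs hy := by
    refine ⟨by simp, fun i hi => ?_⟩
    rcases Nat.even_or_odd (j + 1) with h | h
    · have h0 := skel_zero_of_odd hy (q := (j + 1) / 2) (by omega) (by grind)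
      rw [hom_even _ _ h, cone_apply _ _ _ h0, if_neg, hy.2 i (by grind), mul_zero]
      rintro rfl
      rw [ofNat_val (by omega)] at hi; omega
    · rw [hom_odd _ _ h, rot_apply, hy.2 i (by grind)]; simp
  f_zero j y hj hy := by
    rcases Nat.even_or_odd (j + 1) with h | h
    · have h0 := skel_zero_of_odd hy (q := (j + 1) / 2) (by omega) (by grind)
      refine ext' fun i => ?_
      rw [hom_even _ _ h, cone_apply _ _ _ h0]
      split_ifs with hi
      · rw [hi, h0]; simp
      · simp
    · refine ext' fun i => ?_
      rw [hom_odd _ _ h, rot_apply]; simp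
  f_one y hy := by
    have hN : (N : ℝ) ≠ 0 := Nat.cast_ne_zero.2 (NeZero.ne N)
    refine ext' fun i => ?_
    rw [hom_odd _ _ (by simp), rot_apply, tr_apply, div_self hN, mul_one, hy.1 rfl]
    split_ifs with hi
    · rfl
    · have : i ≠ 0 := hi
      simp [base, this]
  f_fix j s y hj ho hy := by
    have h0 := skel_zero_of_odd hy (q := (j + 2) / 2) (by omega) (by omega)
    refine ext' fun i => ?_
    rw [hom_odd _ _ (by grind), rot_apply]
    split_ifs with hi
    · rw [hi, h0, mul_zero]
    · rfl
  f_top j s y hj ho hs hy := by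
    have hN : (N : ℝ) ≠ 0 := Nat.cast_ne_zero.2 (NeZero.ne N)
    have h0 := skel_zero_of_odd hy (q := (j + 1) / 2) (by omega) (by grind)
    have e : (j + 2) / 2 = (j + 1) / 2 := by grind
    refine ext' fun i => ?_
    rw [hom_odd _ _ (by grind), rot_apply, tr_apply, hom_even _ _ (by grind : Even (j + 1)),
      cone_apply _ _ _ (by rw [tr_apply, h0, mul_zero]), cone_apply _ _ _ h0, e, div_self hN,
      mul_one, tr_apply]
    split_ifs with hi
    · rfl
    · ring
  f_const j s i y hj he hs hy := by
    have hN : (N : ℝ) ≠ 0 := Nat.cast_ne_zero.2 (NeZero.ne N)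
    have h0 := skel_zero_of_odd hy (q := (j + 2) / 2) (by omega) (by omega)
    have h1 : ∀ s', (((tr m)^[i] (hom m n N (j + 1) s' y))).1
        (Fin.ofNat (n + 1) ((j + 2) / 2)) = 0 := by
      intro s'
      rw [tr_iter, hom_odd _ _ (by grind : Odd (j + 1)), rot_apply, h0]; simp
    refine ext' fun a => ?_
    rw [hom_even _ _ (by grind), cone_apply _ _ _ (h1 s), cone_apply _ _ _ (h1 _), div_self hN,
      mul_one, Real.cos_pi_div_two]
    simp

lemma dist_hom (m n N : ℕ) [NeZero m] [NeZero N] {j s s₁ s₂ : ℕ} (hj : j < 2 * n + 1)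
    {y z : Sph n} (hy : y ∈ skel n j) (hz : z ∈ skel n j) (h₁ : s₁ = s ∨ s₁ = s + 1)
    (h₂ : s₂ = s ∨ s₂ = s + 1) :
    dist (hom m n N (j + 1) s₁ y) (hom m n N (j + 1) s₂ z) ≤ dist y z + 2 * Real.pi / N := by
  have hN : (0 : ℝ) < N := Nat.cast_pos.2 (Nat.pos_of_ne_zero (NeZero.ne N))
  have hm : (1 : ℝ) ≤ m := by exact_mod_cast Nat.one_le_iff_ne_zero.2 (NeZero.ne m)
  have hs : |(s₁ : ℝ) / N - s₂ / N| ≤ 1 / N := by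
    rw [← sub_div, abs_div, abs_of_pos hN]
    refine div_le_div_of_nonneg_right ?_ hN.le
    rcases h₁ with rfl | rfl <;> rcases h₂ with rfl | rfl <;> push_cast <;> norm_num
  have key : ∀ c : ℝ, 0 ≤ c → |c * ((s₁ : ℝ) / N) - c * (s₂ / N)| ≤ c / N := by
    intro c hc
    rw [← mul_sub, abs_mul, abs_of_nonneg hc, div_eq_mul_one_div c]
    exact mul_le_mul_of_nonneg_left hs hc
  rcases Nat.even_or_odd (j + 1) with h | h
  · rw [hom_even _ _ h, hom_even _ _ h]
    refine (dist_cone _ _ _ _ _ (skel_zero_of_odd hy (q := (j + 1) / 2) (by omega) (by grind))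
      (skel_zero_of_odd hz (q := (j + 1) / 2) (by omega) (by grind))).trans ?_
    have := key (Real.pi / 2) (by positivity)
    have h3 : Real.pi / 2 / N * 2 ≤ 2 * Real.pi / N := by
      rw [div_mul_eq_mul_div]
      refine div_le_div_of_nonneg_right ?_ hN.le
      linarith [Real.pi_pos]
    linarith
  · rw [hom_odd _ _ h, hom_odd _ _ h]
    refine (dist_rot _ _ _ _ _).trans ?_
    have := key (2 * Real.pi / m) (by positivity)
    have h3 : 2 * Real.pi / m / N ≤ 2 * Real.pi / N :=
      div_le_div_of_nonneg_right (div_le_self (by positivity) hm) hN.le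
    linarith

/-- Sequences in the `j`-skeleton of small diameter. -/
def small (n : ℕ) (η : ℝ) (j : ℕ) (l : List (Sph n)) : Prop :=
  (∀ y ∈ l, y ∈ skel n j) ∧ ∀ y ∈ l, ∀ z ∈ l, dist y z ≤ j * η

lemma small_prop' (m n N : ℕ) [NeZero m] [NeZero N] :
    (cells m n N).Prop' (small n (2 * Real.pi / N)) where
  t_map j l hj h := by
    refine ⟨(cells m n N).prop'_sk.t_map j l hj h.1, ?_⟩
    intro y hy z hz
    obtain ⟨y, hy', rfl⟩ := List.mem_map.1 hy
    obtain ⟨z, hz', rfl⟩ := List.mem_map.1 hz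
    exact (dist_scal _ (norm_zt m) y z).trans_le (h.2 y hy' z hz')
  f_map j s l l' hj hs h h' := by
    refine ⟨(cells m n N).prop'_sk.f_map j s l l' hj hs h.1 h', ?_⟩
    have h'' : ∀ z ∈ l', ∃ y ∈ l, ∃ s', (s' = s ∨ s' = s + 1) ∧ z = hom m n N (j + 1) s' y := by
      intro z hz
      obtain ⟨y, hy, e | e⟩ := h' z hz
      · exact ⟨y, hy, s, Or.inl rfl, e⟩
      · exact ⟨y, hy, s + 1, Or.inr rfl, e⟩
    intro y hy z hz
    obtain ⟨y, hy', s₁, h₁, rfl⟩ := h'' y hy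
    obtain ⟨z, hz', s₂, h₂, rfl⟩ := h'' z hz
    refine (dist_hom m n N hj (h.1 y hy') (h.1 z hz') h₁ h₂).trans ?_
    have := h.2 y hy' z hz'
    push_cast
    linarith

lemma base_mem (n : ℕ) : base n ∈ skel n 0 :=
  ⟨fun _ => rfl, fun i hi => by
    have : i ≠ 0 := by rintro rfl; simp at hi
    simp [base, this]⟩

/-- If the discretization is fine enough, then the evaluation on product cells only depends on the
values of a cochain on sequences of small diameter. -/
theorem exists_fine (m n k : ℕ) [NeZero m] {ε : ℝ} (hε : 0 < ε) :
    ∃ (N : ℕ) (_ : NeZero N), ∀ (d : Fin k → ℕ), (∀ b, d b ≤ 2 * n + 1) →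
      ∀ F : List (Fin k → Sph n) → ZMod m,
      (∀ l, (∀ y ∈ l, ∀ z ∈ l, dist y z < ε) → F l = 0) → (cells m n N).Zd (base n) d F = 0 := by
  obtain ⟨N, hN⟩ := exists_nat_gt ((2 * n + 1) * (2 * Real.pi) / ε)
  have hN0 : (0 : ℝ) < N := lt_of_le_of_lt (by positivity) hN
  refine ⟨N, ⟨by rintro rfl; simp at hN0⟩, fun d hd F hF => ?_⟩
  have : NeZero N := ⟨by rintro rfl; simp at hN0⟩
  rw [(cells m n N).Zd_congr (small_prop' m n N) (fun j l l' hl h =>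
    ⟨fun y hy => h.1 y (hl hy), fun y hy z hz => h.2 y (hl hy) z (hl hz)⟩)
    ⟨by simpa using base_mem n, by simp⟩ hd (G := 0)]
  · exact map_zero _
  · intro l hl
    refine hF l fun y hy z hz => ?_
    rw [dist_pi_lt_iff hε]
    intro b
    refine ((hl b).2 _ (List.mem_map_of_mem hy) _ (List.mem_map_of_mem hz)).trans_lt ?_
    have : (d b : ℝ) ≤ 2 * n + 1 := by exact_mod_cast hd b
    calc (d b : ℝ) * (2 * Real.pi / N) ≤ (2 * n + 1) * (2 * Real.pi / N) :=
          mul_le_mul_of_nonneg_right this (by positivity)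
      _ < ε := by
          rw [← mul_div_assoc, div_lt_iff₀ hN0]
          rw [div_lt_iff₀ hε] at hN
          linarith

end Sph

end Sphere

/-! ### Labels of motion planners -/

set_option linter.unusedSectionVars false

section Labels

variable {n m : ℕ} [NeZero m]

namespace Sph

/-- The action of `ZMod m` on the sphere. -/
noncomputable def act (e : ZMod m) (x : Sph n) : Sph n :=
  scal (zt m ^ e.val) (by rw [norm_pow, norm_zt, one_pow]) x

lemma act_apply (e : ZMod m) (x : Sph n) (i) : (act e x).1 i = zt m ^ e.val * x.1 i := rfl

lemma act_zero (x : Sph n) : act (0 : ZMod m) x = x := ext' fun i => by simp [act_apply]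

lemma act_add (e e' : ZMod m) (x : Sph n) : act (e + e') x = act e (act e' x) := by
  refine ext' fun i => ?_
  rw [act_apply, act_apply, act_apply, ZMod.val_add, ← mul_assoc, ← pow_add,
    ← pow_mod_orderOf, ← (zt_prim m).eq_orderOf, Nat.mod_mod, ← pow_mod_orderOf (n := _ + _),
    ← (zt_prim m).eq_orderOf]

lemma act_one (x : Sph n) : act (1 : ZMod m) x = tr m x := by
  refine ext' fun i => ?_
  rw [act_apply, tr_apply, ZMod.val_one_eq_one_mod, ← pow_mod_orderOf, ← (zt_prim m).eq_orderOf,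
    Nat.mod_mod]
  nth_rewrite 2 [← pow_one (zt m)]
  rw [← pow_mod_orderOf (n := 1), ← (zt_prim m).eq_orderOf]

lemma act_inj {e e' : ZMod m} {x : Sph n} (h : act e x = act e' x) : e = e' := by
  obtain ⟨i, hi⟩ : ∃ i, x.1 i ≠ 0 := by
    by_contra! hc
    have : x.1 = 0 := by ext i; exact hc i
    have h1 := x.norm_eq
    simp [this] at h1
  have h2 : (act e x).1 i = (act e' x).1 i := by rw [h]
  rw [act_apply, act_apply] at h2
  exact ZMod.val_injective m
    ((zt_prim m).pow_inj (ZMod.val_lt e) (ZMod.val_lt e') (mul_right_cancel₀ hi h2))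

lemma continuous_act (e : ZMod m) : Continuous (act e : Sph n → Sph n) :=
  Continuous.subtype_mk (f := fun x : Sph n => zt m ^ e.val • x.1)
    (by fun_prop) _

/-- The action as an action of a multiplicative group. -/
noncomputable instance actInst : MulAction (Multiplicative (ZMod m)) (Sph n) where
  smul e x := act e.toAdd x
  one_smul := act_zero
  mul_smul e e' := act_add e.toAdd e'.toAdd

instance : ContinuousConstSMul (Multiplicative (ZMod m)) (Sph n) :=
  ⟨fun e => continuous_act e.toAdd⟩

instance : IsCancelSMul (Multiplicative (ZMod m)) (Sph n) where
  right_cancel' _ _ _ h := act_inj h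

/-- The projection to the lens space. -/
noncomputable def proj (m n : ℕ) (x : Sph n) : LensSpace m n := Quotient.mk (lensSetoid m n) x

lemma proj_eq_iff {x y : Sph n} : proj m n x = proj m n y ↔ ∃ e : ZMod m, y = act e x := by
  refine Iff.trans (Quotient.eq (r := lensSetoid m n)) ?_
  constructor
  · rintro ⟨ζ, hζ, h⟩
    obtain ⟨i, hi, hi'⟩ := (zt_prim m).eq_pow_of_pow_eq_one
      (show (ζ : ℂ) ^ m = 1 by rw [← Units.val_pow_eq_pow_val, hζ, Units.val_one])
    refine ⟨(i : ZMod m), ext' fun a => ?_⟩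
    rw [act_apply, ZMod.val_cast_of_lt hi, hi', h]; rfl
  · rintro ⟨e, rfl⟩
    refine ⟨Units.mk0 (zt m ^ e.val) ?_, ?_, rfl⟩
    · rw [← norm_ne_zero_iff, norm_pow, norm_zt]; simp
    · ext
      push_cast
      rw [Units.val_mk0, ← pow_mul, mul_comm, pow_mul, (zt_prim m).pow_eq_one, one_pow]

lemma proj_act (e : ZMod m) (x : Sph n) : proj m n (act e x) = proj m n x :=
  (proj_eq_iff.2 ⟨e, rfl⟩).symm

lemma proj_cov (m n : ℕ) [NeZero m] : IsCoveringMap (proj m n) := by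
  have hq : Topology.IsQuotientMap (proj m n) := isQuotientMap_quot_mk
  refine (hq.isQuotientCoveringMap_of_properlyDiscontinuousSMul (G := Multiplicative (ZMod m))
    fun {x y} => ?_).isCoveringMap
  rw [eq_comm, proj_eq_iff (m := m)]
  constructor
  · rintro ⟨e, rfl⟩; exact ⟨Multiplicative.ofAdd e, rfl⟩
  · rintro ⟨e, rfl⟩; exact ⟨e.toAdd, rfl⟩

lemma proj_surj (m n : ℕ) : Function.Surjective (proj m n) := Quotient.mk_surjective

/-- A (discontinuous) equivariant function on the sphere. -/
lemma exists_nu (m n : ℕ) [NeZero m] : ∃ ν : Sph n → ZMod m, ∀ x, ν (tr m x) = ν x + 1 := by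
  have h : ∀ x : Sph n, ∃ e : ZMod m,
      x = act e (Function.surjInv (proj_surj m n) (proj m n x)) :=
    fun x => proj_eq_iff.1 (Function.surjInv_eq (proj_surj m n) _)
  choose ν hν using h
  refine ⟨ν, fun x => ?_⟩
  have h1 := hν (tr m x)
  rw [← act_one, proj_act] at h1
  nth_rewrite 1 [hν x] at h1
  rw [← act_add] at h1
  rw [← act_one, ← act_inj h1, add_comm]

/-- Over the preimage of an open set with a motion planner, comparing the coordinates of a point
with the lifts of the paths chosen by the planner gives locally constant labels with values in
`ZMod m`. Replacing the coordinate `b` by its translate raises the label of `b` by one, and lowers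
all the labels by one if `b = 0`, so that differences of labels are equivariant. Outside the
preimage the labels are given by an equivariant function. -/
theorem exists_label {k : ℕ} (hk : 2 ≤ k) {U : Set (Fin k → LensSpace m n)} (hU : IsOpen U)
    (hs : HasSec k U) {ν : Sph n → ZMod m} (hν : ∀ x, ν (tr m x) = ν x + 1) :
    ∃ c : (Fin k → Sph n) → Fin k → ZMod m,
      (∀ a b i y, c (CellSys.onCoord i (tr m) y) a - c (CellSys.onCoord i (tr m) y) b =
        (c y a - c y b) + (if i = a then 1 else 0) - (if i = b then 1 else 0)) ∧
      ∀ y, (fun i => proj m n (y i)) ∈ U → ∀ᶠ z in nhds y, c z = c y := by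
  classical
  obtain ⟨s, hs⟩ := hs
  have hpc : Continuous (proj m n) := (proj_cov m n).continuous
  let A : Set (Fin k → Sph n) := {y | (fun i => proj m n (y i)) ∈ U}
  have hAo : IsOpen A :=
    hU.preimage (continuous_pi fun i => hpc.comp (continuous_apply i))
  let pr : C(A, U) := ⟨fun y => ⟨fun i => proj m n (y.1 i), y.2⟩,
    Continuous.subtype_mk (continuous_pi fun i =>
      hpc.comp ((continuous_apply i).comp continuous_subtype_val)) _⟩
  let H : C(unitInterval × A, LensSpace m n) := ⟨fun p => s (pr p.2) p.1, by fun_prop⟩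
  set o : Fin k := ⟨0, by omega⟩ with ho
  let f : C(A, Sph n) := ⟨fun y => y.1 o, (continuous_apply o).comp continuous_subtype_val⟩
  let τ : Fin k → unitInterval := fun i =>
    Set.projIcc 0 1 zero_le_one ((i : ℝ) / ((k : ℝ) - 1))
  have hτ : ∀ (y : A) i, H (τ i, y) = proj m n (y.1 i) := fun y i => congrFun (hs (pr y)) i
  have hτo : τ o = 0 := by simp [τ, ho, Set.projIcc_left]
  have H0 : ∀ y, H (0, y) = proj m n (f y) := fun y => by rw [← hτo, hτ]; rfl
  let G := (proj_cov m n).liftHomotopy H f H0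
  have hG : ∀ t y, proj m n (G (t, y)) = H (t, y) := fun t y =>
    congrFun ((proj_cov m n).liftHomotopy_lifts H f H0) (t, y)
  have hG0 : ∀ y, G (0, y) = y.1 o := (proj_cov m n).liftHomotopy_zero H f H0
  have hex : ∀ (y : A) i, ∃ e : ZMod m, y.1 i = act e (G (τ i, y)) := fun y i =>
    proj_eq_iff.1 ((hG _ _).trans (hτ y i))
  choose lab hlab using hex
  let c : (Fin k → Sph n) → Fin k → ZMod m := fun y i =>
    if h : y ∈ A then lab ⟨y, h⟩ i else ν (y i)
  have hpi : ∀ i (y : Fin k → Sph n) j,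
      proj m n (CellSys.onCoord i (tr m) y j) = proj m n (y j) := by
    intro i y j
    by_cases h : j = i
    · subst h; rw [CellSys.onCoord_same, ← act_one, proj_act]
    · rw [CellSys.onCoord_ne h]
  have hA : ∀ i y, CellSys.onCoord i (tr m) y ∈ A ↔ y ∈ A := by
    intro i y
    simp only [A, Set.mem_ofPred_eq, hpi]
  refine ⟨c, ?_, ?_⟩
  · intro a b i y
    by_cases hy : y ∈ A
    · have hy' := (hA i y).2 hy
      simp only [c, dif_pos hy, dif_pos hy']
      set δ : ZMod m := if i = o then 1 else 0 with hδ
      have hpr : pr ⟨_, hy'⟩ = pr ⟨y, hy⟩ := Subtype.ext (funext fun j => hpi i y j)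
      have hpath : (fun t => G (t, ⟨_, hy'⟩)) = fun t => act δ (G (t, ⟨y, hy⟩)) := by
        refine (proj_cov m n).eq_of_comp_eq (by fun_prop)
          ((continuous_act δ).comp (by fun_prop)) ?_ 0 ?_
        · funext t
          simp only [Function.comp, proj_act, hG]
          change s (pr ⟨_, hy'⟩) t = s (pr ⟨y, hy⟩) t
          rw [hpr]
        · simp only [hG0]
          by_cases hi : i = o
          · rw [hδ, if_pos hi, hi, CellSys.onCoord_same, act_one]
          · rw [hδ, if_neg hi, CellSys.onCoord_ne (Ne.symm hi), act_zero]
      have key : ∀ j, lab ⟨_, hy'⟩ j + δ = lab ⟨y, hy⟩ j + if i = j then 1 else 0 := by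
        intro j
        refine act_inj (x := G (τ j, ⟨y, hy⟩)) ?_
        have h1 := hlab ⟨_, hy'⟩ j
        rw [congrFun hpath (τ j)] at h1
        rw [act_add, ← h1, add_comm, act_add, ← hlab ⟨y, hy⟩ j]
        by_cases hj : i = j
        · subst hj; rw [if_pos rfl, act_one]; exact CellSys.onCoord_same _ _ _
        · rw [if_neg hj, act_zero]; exact CellSys.onCoord_ne (Ne.symm hj) _ _
      linear_combination key a - key b
    · have hy' := fun h => hy ((hA i y).1 h)
      simp only [c, dif_neg hy, dif_neg hy']
      have key : ∀ j, ν (CellSys.onCoord i (tr m) y j) = ν (y j) + if i = j then 1 else 0 := by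
        intro j
        by_cases hj : i = j
        · subst hj; rw [if_pos rfl, CellSys.onCoord_same, hν]
        · rw [if_neg hj, CellSys.onCoord_ne (Ne.symm hj), add_zero]
      linear_combination key a - key b
  · intro y hy
    have hyA : y ∈ A := hy
    have h1 : ∀ᶠ z : A in nhds ⟨y, hyA⟩, lab z = lab ⟨y, hyA⟩ := by
      have h2 : ∀ i : Fin k, ∀ e : ZMod m, e ≠ lab ⟨y, hyA⟩ i →
          ∀ᶠ z : A in nhds ⟨y, hyA⟩, z.1 i ≠ act e (G (τ i, z)) := by
        intro i e he
        have hc1 : Continuous fun z : A => z.1 i :=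
          (continuous_apply i).comp continuous_subtype_val
        have hc2 : Continuous fun z : A => act e (G (τ i, z)) :=
          (continuous_act e).comp (by fun_prop)
        refine (isOpen_ne_fun hc1 hc2).mem_nhds ?_
        intro h
        exact he (act_inj (h.symm.trans (hlab ⟨y, hyA⟩ i)))
      have h3 : ∀ᶠ z : A in nhds ⟨y, hyA⟩, ∀ i : Fin k, ∀ e : ZMod m,
          e ≠ lab ⟨y, hyA⟩ i → z.1 i ≠ act e (G (τ i, z)) := by
        simp only [Filter.eventually_all]
        exact h2
      filter_upwards [h3] with z hz
      funext i
      by_contra hne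
      exact hz i _ hne (hlab z i)
    rw [← map_nhds_subtype_coe_eq_nhds hyA (hAo.mem_nhds hyA), Filter.eventually_map]
    filter_upwards [h1] with z hz
    funext i
    simp only [c, dif_pos hyA, dif_pos z.2]
    rw [hz]

end Sph

end Labels

/-! ### Lebesgue numbers and the lower bound -/

section Bound

namespace Sph

/-- The bound in both parities: a cover by `r` sets as in the definition of the topological
complexity has more members than the degree of the products in `CellSys.exists_eval`. -/
theorem degree_lt {k m n : ℕ} [NeZero m] (hk : 2 ≤ k) {l l' : ℕ} (hl : l ≤ n) (hl' : l' ≤ n)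
    (hdvd : ¬ (m ∣ (Nat.choose (l + l') l') ^ (k / 2))) {r : ℕ}
    (hr : TCCoverAt (LensSpace m n) k r) :
    (if Even k then k * (l + l') + (k - 1) else (k - 1) * (l + l') + 2 * n + (k - 1)) < r := by
  by_contra! hlt
  obtain ⟨U, hUo, hUc, hUs⟩ := hr
  obtain ⟨ν, hν⟩ := exists_nu m n
  choose c hc hloc using fun i => exists_label hk (hUo i) (hUs i) hν
  obtain ⟨ε, hε, hεc⟩ := lebesgue_number_lemma_of_metric
    (s := (Set.univ : Set (Fin k → Sph n))) isCompact_univ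
    (c := fun p : Fin r × (Fin k → ZMod m) => interior {y | c p.1 y = p.2})
    (fun p => isOpen_interior) (by
      intro y _
      obtain ⟨i, hi⟩ := Set.mem_iUnion.1 (hUc.symm ▸ Set.mem_univ fun j => proj m n (y j) :
        (fun j => proj m n (y j)) ∈ ⋃ i, U i)
      exact Set.mem_iUnion.2 ⟨(i, c i y), mem_interior_iff_mem_nhds.2 (hloc i y hi)⟩)
  obtain ⟨N, hN, hfine⟩ := exists_fine m n k hε
  -- The positions beyond the size of the cover use the equivariant function `ν`.
  let c' : ℕ → (Fin k → Sph n) → Fin k → ZMod m := fun s y a =>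
    if h : s < r then c ⟨s, h⟩ y a else ν (y a)
  have hc' : (cells m n N).Compat c' := by
    intro s a b i y
    by_cases h : s < r
    · simp only [c', dif_pos h]
      exact hc ⟨s, h⟩ a b i y
    · simp only [c', dif_neg h]
      have key : ∀ j, ν (CellSys.onCoord i (tr m) y j) = ν (y j) + if i = j then 1 else 0 := by
        intro j
        by_cases hj : i = j
        · subst hj; rw [if_pos rfl, CellSys.onCoord_same, hν]
        · rw [if_neg hj, CellSys.onCoord_ne (Ne.symm hj), add_zero]
      change ν (CellSys.onCoord i (tr m) y a) - ν (CellSys.onCoord i (tr m) y b) = _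
      linear_combination key a - key b
  obtain ⟨d, P, Q, X, hd, hX, hdeg, hval⟩ := CellSys.exists_eval (C := cells m n N) hν
    (base_mem n) hk hc' hl hl'
  rw [hfine d hd] at hval
  · have h0 : ((l + l').choose l' : ZMod m) ^ (k / 2) = 0 := by
      rw [← mul_one (_ ^ _), ← hX, ← mul_assoc, ← hval, zero_mul]
    rw [← Nat.cast_pow, ZMod.natCast_eq_zero_iff] at h0
    exact hdvd h0
  · intro L hL
    rcases L with _ | ⟨y, L⟩
    · exact (CellSys.wordY_coc c' 0 P Q).nil
    · obtain ⟨⟨i, v⟩, hv⟩ := hεc y (Set.mem_univ _)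
      have hz : ∀ z ∈ y :: L, c' i z = v := by
        intro z hz
        have h1 : c i z = v := by
          have h2 := hv (Metric.mem_ball.2 (hL z hz y (by simp)))
          exact interior_subset (s := {y | c i y = v}) h2
        funext a
        simp only [c', dif_pos i.2]
        exact congrFun h1 a
      refine CellSys.wordY_vanish c' P Q 0 i (Nat.zero_le _) ?_ _ fun y hy z hz' =>
        (hz y hy).trans (hz z hz').symm
      have := i.2
      omega

end Sph

end Bound

/-- Lower bounds on `TC_k(L^{2n+1}_m)`: if `m` does not divide `C(l+l', l')^⌊k/2⌋`
for some `0 ≤ l, l' ≤ n`, then there is no cover of `(L^{2n+1}_m)^k` by fewer than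
`k(l+l'+1)` (for `k` even), resp. `(k-1)(l+l') + k + 2n` (for `k` odd), open sets each
admitting a continuous section of `π_k`. -/
theorem stmt14 (k m n : ℕ) (hk : 2 ≤ k) (hm : 2 ≤ m)
    (l l' : ℕ) (hl : l ≤ n) (hl' : l' ≤ n)
    (hdvd : ¬ (m ∣ (Nat.choose (l + l') l') ^ (k / 2))) :
    (Even k → ∀ r : ℕ, TCCoverAt (LensSpace m n) k r → k * (l + l' + 1) ≤ r) ∧
    (Odd k → ∀ r : ℕ, TCCoverAt (LensSpace m n) k r →
      (k - 1) * (l + l') + k + 2 * n ≤ r) := by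
  have : NeZero m := ⟨by omega⟩
  refine ⟨fun h r hr => ?_, fun h r hr => ?_⟩
  · have := Sph.degree_lt hk hl hl' hdvd hr
    rw [if_pos h] at this
    rw [mul_add_one]
    omega
  · have := Sph.degree_lt hk hl hl' hdvd hr
    rw [if_neg (Nat.not_even_iff_odd.2 h)] at this
    omega
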